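/- Let m be a positive integer. For τ in the upper half-plane and z1, z3 ∈ ℂ such that all denominators occurring are nonzero (i.e., none of z1, z1+1/2, z3, z3+1/2 lies in ℤ + ℤτ), the following identity holds: θ_{0,m+1}(τ, (−1/2 + m(z1+z3))/(m+1)) · { Φ^{[m,0]}(τ, z1, −z3, 0) − Φ^{[m,0]}(τ, z1+1/2, −z3−1/2, 0) } = 2i η(τ)² η(2τ)² { −θ_{0,m+1}(τ, (1/2+z1+z3)/(m+1) + z1−z3) / (ϑ_{11}(τ,z1) ϑ_{10}(τ,z1)) + θ_{0,m+1}(τ, (1/2+z1+z3)/(m+1) − z1+z3) / (ϑ_{11}(τ,z3) ϑ_{10}(τ,z3)) } + 2 Σ_{j=1}^∞ Σ_{r=1}^{j} Σ_{k odd, 1≤k≤m−1} (−1)^j q^{(m+1)j² − (2m(j−r)+k)²/(4m)} { e^{πi(2mr−k)(z1+z3)} + e^{−πi(2mr−k)(z1+z3)} } [θ_{k,m} − θ_{−k,m}](τ, z1−z3) − 2 Σ_{j=1}^∞ Σ_{r=0}^{j−1} Σ_{k odd, 1≤k≤m−1} (−1)^j q^{(m+1)j² − (2m(j−r)−k)²/(4m)}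 { e^{πi(2mr+k)(z1+z3)} + e^{−πi(2mr+k)(z1+z3)} } [θ_{k,m} − θ_{−k,m}](τ, z1−z3). -/

import Mathlib

open Complex

noncomputable section

namespace Wakimoto

/-- `qpow τ x = e^{2πiτx}`, i.e. `q^x` where `q = e^{2πiτ}`. -/
def qpow (τ x : ℂ) : ℂ := Complex.exp (2 * Real.pi * Complex.I * τ * x)

/-- `e2 z = e^{2πiz}`. -/
def e2 (z : ℂ) : ℂ := Complex.exp (2 * Real.pi * Complex.I * z)

/-- The mock theta function `Φ^{[m,s]}_1`. -/
def Phi1 (m s : ℂ) (τ z1 z2 t : ℂ) : ℂ :=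
  Complex.exp (-(2 * Real.pi * Complex.I) * m * t) *
    ∑' j : ℤ,
      Complex.exp (2 * Real.pi * Complex.I * (m * (j : ℂ) * (z1 + z2) + s * z1)) *
          qpow τ (m * (j : ℂ) ^ 2 + s * (j : ℂ)) /
        (1 - e2 z1 * qpow τ (j : ℂ))

/-- The mock theta function `Φ^{[m,s]}_2`. -/
def Phi2 (m s : ℂ) (τ z1 z2 t : ℂ) : ℂ :=
  Complex.exp (-(2 * Real.pi * Complex.I) * m * t) *
    ∑' j : ℤ,
      Complex.exp (-(2 * Real.pi * Complex.I) * (m * (j : ℂ) * (z1 + z2) + s * z2)) *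
          qpow τ (m * (j : ℂ) ^ 2 + s * (j : ℂ)) /
        (1 - e2 (-z2) * qpow τ (j : ℂ))

/-- `Φ^{[m,s]} = Φ^{[m,s]}_1 - Φ^{[m,s]}_2`. -/
def Phi (m s : ℂ) (τ z1 z2 t : ℂ) : ℂ :=
  Phi1 m s τ z1 z2 t - Phi2 m s τ z1 z2 t

/-- Jacobi's theta function `θ_{k,m}`. -/
def jTheta (k m : ℂ) (τ z : ℂ) : ℂ :=
  ∑' j : ℤ,
    Complex.exp (2 * Real.pi * Complex.I * (m * ((j : ℂ) + k / (2 * m)) * z)) *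
      qpow τ (m * ((j : ℂ) + k / (2 * m)) ^ 2)

/-- The signed theta function `θ^{(-)}_{k,m}`. -/
def jThetaM (k m : ℂ) (τ z : ℂ) : ℂ :=
  ∑' j : ℤ,
    (-1 : ℂ) ^ j *
      Complex.exp (2 * Real.pi * Complex.I * (m * ((j : ℂ) + k / (2 * m)) * z)) *
      qpow τ (m * ((j : ℂ) + k / (2 * m)) ^ 2)

/-- The Dedekind eta function. -/
def eta (τ : ℂ) : ℂ := qpow τ (1 / 24) * ∏' n : ℕ, (1 - qpow τ ((n : ℂ) + 1))

/-- The Mumford theta functions `ϑ_{ab}`. -/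
def mumford (a b : ℕ) (τ z : ℂ) : ℂ :=
  ∑' n : ℤ,
    Complex.exp (Real.pi * Complex.I * τ * ((n : ℂ) + (a : ℂ) / 2) ^ 2 +
      2 * Real.pi * Complex.I * ((n : ℂ) + (a : ℂ) / 2) * (z + (b : ℂ) / 2))

/-- `z` lies in the lattice `ℤ + ℤτ`. -/
def InLattice (τ z : ℂ) : Prop := ∃ a b : ℤ, z = (a : ℂ) + (b : ℂ) * τ

/-!
Combining the terms at `z` and `z + 1/2` turns
`Φ^{[m,0]}(z₁, -z₃) - Φ^{[m,0]}(z₁ + 1/2, -z₃ - 1/2)` into the difference of two Appell–Lerch sums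
over `2τ`, one in `z₁` and one in `z₃`. To each belongs an absolutely convergent triple series
over `(n, l, i)`, whose coefficient in `i` is the signed indicator of the interval between `m n`
and `l`. Summing the geometric progression in `i` first yields `θ_{0,m+1}` times the Appell–Lerch
sum, minus a second product in which the Appell–Lerch sum is the partial fraction expansion of
`1 / (ϑ₁₁ ϑ₁₀)`. Summing over `n` and `l` first, the full theta series in `n` vanishes by the
symmetry `n ↦ -(2i + 1) - n`, and a partial theta series in `n` times a theta function of degree
`m` in `z₁ - z₃` remains. In the difference of the series for `z₁` and `z₃` these theta functions
are antisymmetrised; folding `i` with `-(i + 1)` and writing the odd number `2i + 1` as `2mr ± k`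
turns the difference into the correction sums.
-/

open Filter Topology Finset

/-! ### Finite `q`-identities -/

section CommRing

variable {R : Type*} [CommRing R]

/-- The finite `q`-Pochhammer symbol `(a; q)_n`. -/
def qPoch (a q : R) (n : ℕ) : R := ∏ k ∈ range n, (1 - a * q ^ k)

/-- The Gaussian binomial coefficient, defined by the `q`-Pascal rule. -/
def qBinom (q : R) : ℕ → ℕ → R
  | _, 0 => 1
  | 0, _ + 1 => 0
  | n + 1, k + 1 => qBinom q n (k + 1) + q ^ (n - k) * qBinom q n k

lemma qPoch_zero (a q : R) : qPoch a q 0 = 1 := prod_range_zero _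

lemma qPoch_succ (a q : R) (n : ℕ) : qPoch a q (n + 1) = qPoch a q n * (1 - a * q ^ n) :=
  prod_range_succ _ _

lemma qPoch_add (a q : R) (m n : ℕ) :
    qPoch a q (m + n) = qPoch a q m * qPoch (a * q ^ m) q n := by
  simp only [qPoch, prod_range_add, pow_add, mul_assoc]

lemma qBinom_zero_right (q : R) (n : ℕ) : qBinom q n 0 = 1 := by cases n <;> rfl

lemma qBinom_eq_zero_of_lt (q : R) {n k : ℕ} (h : n < k) : qBinom q n k = 0 := by
  induction n generalizing k with
  | zero => obtain ⟨k, rfl⟩ := Nat.exists_eq_add_of_lt h; simp [qBinom]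
  | succ n ih =>
    obtain ⟨k, rfl⟩ := Nat.exists_eq_succ_of_ne_zero (Nat.ne_zero_of_lt h)
    rw [qBinom, ih (by omega), ih (by omega), mul_zero, add_zero]

lemma qBinom_self (q : R) (n : ℕ) : qBinom q n n = 1 := by
  induction n with
  | zero => rfl
  | succ n ih =>
    rw [qBinom, qBinom_eq_zero_of_lt q n.lt_succ_self, ih, Nat.sub_self, pow_zero, mul_one,
      zero_add]

lemma qPoch_mul_qPoch_mul_qBinom (q : R) (k l : ℕ) :
    qPoch q q k * qPoch q q l * qBinom q (k + l) k = qPoch q q (k + l) := by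
  induction k generalizing l with
  | zero => simp [qBinom_zero_right, qPoch_zero]
  | succ k ihk =>
    induction l with
    | zero => simp [qBinom_self, qPoch_zero]
    | succ l ihl =>
      have h := ihk (l + 1)
      rw [← add_assoc, add_right_comm, ← ihl] at h
      rw [← add_assoc, qBinom, qPoch_succ q q (k + 1 + l), ← ihl,
        show k + 1 + l - k = l + 1 by omega]
      rw [qPoch_succ q q k, qPoch_succ q q l] at *
      linear_combination q ^ (l + 1) * (1 - q ^ (k + 1)) * h

lemma choose_two_succ (n : ℕ) : (n + 1).choose 2 = n + n.choose 2 := by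
  rw [Nat.choose_succ_succ' n 1, Nat.choose_one_right]

lemma two_mul_choose_two (n : ℕ) : 2 * (n.choose 2 : ℤ) = n * (n - 1) := by
  induction n with
  | zero => simp
  | succ n ih => rw [choose_two_succ]; push_cast; linarith

lemma prod_range_pow (q : R) (n : ℕ) : ∏ k ∈ range n, q ^ k = q ^ n.choose 2 := by
  induction n with
  | zero => simp
  | succ n ih => rw [prod_range_succ, ih, choose_two_succ, ← pow_add, add_comm]

lemma qPoch_eq_sum_qBinom (a q : R) (n : ℕ) :
    qPoch a q n = ∑ k ∈ range (n + 1), q ^ k.choose 2 * qBinom q n k * (-a) ^ k := by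
  induction n with
  | zero => simp [qPoch_zero, qBinom]
  | succ n ih =>
    set f : ℕ → R := fun k ↦ q ^ k.choose 2 * qBinom q n k * (-a) ^ k with hf
    have pascal : ∀ k ∈ range (n + 1), q ^ (k + 1).choose 2 * qBinom q (n + 1) (k + 1) *
        (-a) ^ (k + 1) = f (k + 1) - f k * (a * q ^ n) := by
      intro k hk
      obtain ⟨c, rfl⟩ := Nat.exists_eq_add_of_le (Nat.lt_succ_iff.1 (mem_range.1 hk))
      simp only [hf, qBinom, choose_two_succ, Nat.add_sub_cancel_left]
      ring
    have shift : ∑ k ∈ range (n + 1), f k = ∑ k ∈ range (n + 1), f (k + 1) + 1 := by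
      have h := sum_range_succ' f (n + 1)
      rw [sum_range_succ] at h
      simpa [hf, qBinom_zero_right, qBinom_eq_zero_of_lt q n.lt_succ_self] using h
    rw [qPoch_succ, ih, sum_range_succ' _ (n + 1), sum_congr rfl pascal, sum_sub_distrib,
      ← sum_mul, Nat.choose_zero_succ, pow_zero, pow_zero, qBinom_zero_right]
    linear_combination shift

lemma prod_range_pow_sub_pow (q : R) (i : ℕ) :
    ∏ j ∈ range i, (q ^ i - q ^ j) = (-1) ^ i * q ^ i.choose 2 * qPoch q q i := by
  rw [← prod_range_pow, qPoch, pow_eq_prod_const (-1 : R), ← prod_mul_distrib,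
    ← prod_range_reflect (fun k ↦ 1 - q * q ^ k), ← prod_mul_distrib]
  refine prod_congr rfl fun j hj ↦ ?_
  obtain ⟨c, rfl⟩ := Nat.exists_eq_add_of_lt (mem_range.1 hj)
  rw [show j + c + 1 - 1 - j = c by omega]
  ring

lemma prod_range_pow_sub_pow_add (q : R) (i l : ℕ) :
    ∏ k ∈ range l, (q ^ i - q ^ (i + 1 + k)) = q ^ (i * l) * qPoch q q l := by
  rw [pow_mul, qPoch, pow_eq_prod_const (q ^ i), ← prod_mul_distrib]
  exact prod_congr rfl fun j _ ↦ by ring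

lemma prod_range_erase (f : ℕ → R) (i l : ℕ) :
    ∏ j ∈ (range (i + 1 + l)).erase i, f j =
      (∏ j ∈ range i, f j) * ∏ k ∈ range l, f (i + 1 + k) := by
  have hunion : (range (i + 1 + l)).erase i = range i ∪ Ico (i + 1) (i + 1 + l) := by
    ext a; simp only [mem_erase, mem_range, mem_union, mem_Ico]; omega
  have hdisj : Disjoint (range i) (Ico (i + 1) (i + 1 + l)) := by
    rw [disjoint_left]; intro a; simp only [mem_range, mem_Ico]; omega
  rw [hunion, prod_union hdisj, prod_Ico_eq_prod_range, Nat.add_sub_cancel_left]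

end CommRing

section Field

variable {K : Type*} [Field K] {q x : K}

/-- The triangular number `j(j+1)/2` of an integer `j`. -/
def triangular (j : ℤ) : ℤ := j * (j + 1) / 2

lemma two_mul_triangular (j : ℤ) : 2 * triangular j = j * (j + 1) :=
  Int.two_mul_ediv_two_of_even (Int.even_mul_succ_self j)

lemma triangular_sub (k n : ℕ) :
    triangular ((k : ℤ) - n) = (k.choose 2 : ℕ) + (1 - (n : ℤ)) * k + (n.choose 2 : ℕ) := by
  linarith [two_mul_triangular ((k : ℤ) - n), two_mul_choose_two k, two_mul_choose_two n]

lemma qPoch_mul_zpow_one_sub (hq : q ≠ 0) (hx : x ≠ 0) (n : ℕ) :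
    qPoch (x * q ^ (1 - (n : ℤ))) q n = (-x) ^ n * (q ^ n.choose 2)⁻¹ * qPoch x⁻¹ q n := by
  rw [qPoch, qPoch, ← prod_range_reflect, ← prod_range_pow, ← prod_inv_distrib,
    pow_eq_prod_const (-x), ← prod_mul_distrib, ← prod_mul_distrib]
  refine prod_congr rfl fun k hk ↦ ?_
  have hpow : q ^ (1 - (n : ℤ)) * q ^ (n - 1 - k) = (q ^ k)⁻¹ := by
    rw [← zpow_natCast, ← zpow_natCast, ← zpow_add₀ hq, ← zpow_neg]
    congr 1
    have := mem_range.1 hk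
    omega
  rw [mul_assoc, hpow]
  have := pow_ne_zero k hq
  field_simp
  ring

lemma qPoch_mul_qPoch_inv_eq_sum (hq : q ≠ 0) (hx : x ≠ 0) (n : ℕ) :
    qPoch (x * q) q n * qPoch x⁻¹ q n =
      ∑ i ∈ range (2 * n + 1),
        (-1) ^ ((i : ℤ) - n) * q ^ triangular (i - n) * x ^ ((i : ℤ) - n) *
          qBinom q (2 * n) i := by
  have hx' : -x ≠ 0 := neg_ne_zero.2 hx
  have hpow : q ^ (1 - (n : ℤ)) * q ^ n = q := by
    rw [← zpow_natCast q n, ← zpow_add₀ hq, sub_add_cancel, zpow_one]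
  -- The `q`-binomial theorem, with its `2n` factors centred at `x`.
  have hrothe := qPoch_eq_sum_qBinom (x * q ^ (1 - (n : ℤ))) q (n + n)
  rw [qPoch_add, qPoch_mul_zpow_one_sub hq hx, mul_assoc x, hpow, ← two_mul] at hrothe
  have hc : (-x) ^ n * (q ^ n.choose 2)⁻¹ ≠ 0 :=
    mul_ne_zero (pow_ne_zero _ hx') (inv_ne_zero (pow_ne_zero _ hq))
  refine mul_left_cancel₀ hc ?_
  rw [mul_comm (qPoch (x * q) q n), ← mul_assoc, hrothe, mul_sum]
  refine sum_congr rfl fun i _ ↦ ?_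
  have hsign : (-1 : K) ^ ((i : ℤ) - n) * x ^ ((i : ℤ) - n) = (-x) ^ i * ((-x) ^ n)⁻¹ := by
    rw [← mul_zpow, neg_one_mul, zpow_sub₀ hx', zpow_natCast, zpow_natCast, div_eq_mul_inv]
  rw [mul_right_comm ((-1 : K) ^ _), hsign, triangular_sub, zpow_add₀ hq, zpow_add₀ hq,
    zpow_natCast, zpow_natCast, ← neg_mul, mul_pow, ← zpow_natCast (q ^ (1 - (n : ℤ))),
    ← zpow_mul]
  have := pow_ne_zero n hx'
  have := pow_ne_zero (n.choose 2) hq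
  field_simp

lemma qPoch_self_ne_zero (hq : Function.Injective fun n : ℕ ↦ q ^ n) (n : ℕ) :
    qPoch q q n ≠ 0 := by
  refine prod_ne_zero_iff.2 fun k _ h ↦ k.succ_ne_zero (hq ?_)
  simpa only [pow_succ', pow_zero] using (sub_eq_zero.1 h).symm

lemma nodalWeight_pow (q : K) (i l : ℕ) :
    Lagrange.nodalWeight (range (i + 1 + l)) (fun j : ℕ ↦ q ^ j) i =
      ((-1) ^ i * q ^ i.choose 2 * qPoch q q i * (q ^ (i * l) * qPoch q q l))⁻¹ := by
  rw [Lagrange.nodalWeight, prod_inv_distrib, prod_range_erase (fun j ↦ q ^ i - q ^ j),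
    prod_range_pow_sub_pow, prod_range_pow_sub_pow_add]

/-- Lagrange interpolation of `y ^ n` at the nodes `1, q, …, q ^ (n + l)`, where `y = a⁻¹`. -/
lemma pow_eq_qPoch_mul_sum (hq : Function.Injective fun n : ℕ ↦ q ^ n) {a : K} (ha : a ≠ 0)
    (n l : ℕ) (hne : ∀ i < n + l + 1, a * q ^ i ≠ 1) :
    a ^ l = qPoch a q (n + l + 1) * ∑ i ∈ range (n + l + 1),
      Lagrange.nodalWeight (range (n + l + 1)) (fun j : ℕ ↦ q ^ j) i * q ^ (i * n) /
        (1 - a * q ^ i) := by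
  have hfac : ∀ i : ℕ, a⁻¹ - q ^ i = a⁻¹ * (1 - a * q ^ i) := fun i ↦ by field_simp
  have hinterp := congrArg (Polynomial.eval a⁻¹) <|
    Lagrange.eq_interpolate (s := range (n + l + 1)) (v := fun i : ℕ ↦ q ^ i)
      (f := (Polynomial.X : Polynomial K) ^ n) hq.injOn (by
        rw [Polynomial.degree_X_pow, card_range]; exact_mod_cast (by omega))
  rw [Lagrange.eval_interpolate_not_at_node _ fun i hi h ↦ hne i (mem_range.1 hi) (by
    rw [← h, mul_inv_cancel₀ ha]), Lagrange.eval_nodal] at hinterp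
  simp only [Polynomial.eval_pow, Polynomial.eval_X, hfac, prod_mul_distrib, prod_const,
    card_range, mul_inv, inv_inv] at hinterp
  rw [← qPoch, inv_pow, inv_pow, pow_succ] at hinterp
  have hsum : ∀ i ∈ range (n + l + 1),
      Lagrange.nodalWeight (range (n + l + 1)) (fun j : ℕ ↦ q ^ j) i *
        (a * (1 - a * q ^ i)⁻¹) * (q ^ i) ^ n =
      a * (Lagrange.nodalWeight (range (n + l + 1)) (fun j : ℕ ↦ q ^ j) i * q ^ (i * n) /
        (1 - a * q ^ i)) := fun i _ ↦ by rw [pow_mul]; ring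
  rw [sum_congr rfl hsum, ← mul_sum, pow_add] at hinterp
  have := pow_ne_zero n ha
  have := pow_ne_zero l ha
  field_simp at hinterp
  exact hinterp

lemma neg_one_pow_mul_nodalWeight_mul (hq : q ≠ 0) {n i : ℕ} (hi : i < 2 * n + 1) :
    (-1) ^ n * q ^ n.choose 2 *
        (Lagrange.nodalWeight (range (2 * n + 1)) (fun j : ℕ ↦ q ^ j) i * q ^ (i * n)) =
      (-1) ^ ((i : ℤ) - n) * q ^ triangular (i - n) *
        ((qPoch q q i)⁻¹ * (qPoch q q (2 * n - i))⁻¹) := by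
  have hpow : q ^ n.choose 2 * q ^ (i * n) =
      q ^ triangular (i - n) * (q ^ i.choose 2 * q ^ (i * (2 * n - i))) := by
    simp only [← zpow_natCast, ← zpow_add₀ hq]
    congr 1
    rw [triangular_sub]
    push_cast [Nat.cast_sub (show i ≤ 2 * n by omega)]
    linear_combination -two_mul_choose_two i
  have hsign : (-1 : K) ^ n * ((-1) ^ i)⁻¹ = (-1) ^ ((i : ℤ) - n) := by
    rw [zpow_sub₀ (by simp), zpow_natCast, zpow_natCast]
    rcases neg_one_pow_eq_or K n with h | h <;> rcases neg_one_pow_eq_or K i with h' | h' <;>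
      simp [h, h']
  have := pow_ne_zero (i.choose 2) hq
  have := pow_ne_zero (i * (2 * n - i)) hq
  rw [show 2 * n + 1 = i + 1 + (2 * n - i) by omega, nodalWeight_pow]
  simp only [mul_inv]
  calc _ = (-1) ^ n * ((-1) ^ i)⁻¹ * (q ^ n.choose 2 * q ^ (i * n)) * (q ^ i.choose 2)⁻¹ *
        (q ^ (i * (2 * n - i)))⁻¹ * ((qPoch q q i)⁻¹ * (qPoch q q (2 * n - i))⁻¹) := by ring
    _ = _ := by rw [hsign, hpow]; field_simp

lemma qPoch_mul_qPoch_mul_sum_eq_one (hq : q ≠ 0)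
    (hinj : Function.Injective fun n : ℕ ↦ q ^ n) (hx : x ≠ 0)
    (hxq : ∀ j : ℤ, x * q ^ j ≠ 1) (n : ℕ) :
    qPoch (x⁻¹ * q) q n * qPoch x q (n + 1) * ∑ i ∈ range (2 * n + 1),
      (-1) ^ ((i : ℤ) - n) * q ^ triangular (i - n) / (1 - x * q ^ ((i : ℤ) - n)) *
        ((qPoch q q i)⁻¹ * (qPoch q q (2 * n - i))⁻¹) = 1 := by
  set a : K := x * q⁻¹ * q ^ (1 - (n : ℤ)) with ha
  have ha0 : a ≠ 0 := mul_ne_zero (mul_ne_zero hx (inv_ne_zero hq)) (zpow_ne_zero _ hq)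
  have haq : ∀ i : ℕ, a * q ^ i = x * q ^ ((i : ℤ) - n) := fun i ↦ by
    rw [ha, mul_assoc, mul_assoc, ← zpow_neg_one, ← zpow_natCast, ← zpow_add₀ hq, ← zpow_add₀ hq]
    congr 2; ring
  have hfrac := pow_eq_qPoch_mul_sum hinj ha0 n n fun i _ ↦ haq i ▸ hxq _
  have hpow : a ^ n * (q ^ n.choose 2 * q ^ n.choose 2) = (x * q⁻¹) ^ n := by
    rw [ha, mul_pow, mul_assoc]
    simp only [← zpow_natCast, ← zpow_mul, ← zpow_add₀ hq]
    rw [show (1 - (n : ℤ)) * n + (n.choose 2 + n.choose 2) = 0 by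
      linear_combination two_mul_choose_two n, zpow_zero, mul_one]
  rw [add_assoc, qPoch_add, haq, sub_self, zpow_zero, mul_one, ha,
    qPoch_mul_zpow_one_sub hq (mul_ne_zero hx (inv_ne_zero hq)), ← ha, mul_inv, inv_inv,
    neg_pow, ← hpow, ← add_assoc, ← two_mul] at hfrac
  have hcoeff : ∀ i ∈ range (2 * n + 1),
      (-1) ^ ((i : ℤ) - n) * q ^ triangular (i - n) / (1 - x * q ^ ((i : ℤ) - n)) *
        ((qPoch q q i)⁻¹ * (qPoch q q (2 * n - i))⁻¹) = (-1) ^ n * q ^ n.choose 2 *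
      (Lagrange.nodalWeight (range (2 * n + 1)) (fun j : ℕ ↦ q ^ j) i * q ^ (i * n) /
        (1 - a * q ^ i)) := fun i hi ↦ by
    rw [haq, ← mul_div_assoc, neg_one_pow_mul_nodalWeight_mul hq (mem_range.1 hi)]
    ring
  rw [sum_congr rfl hcoeff, ← mul_sum]
  have := pow_ne_zero (n.choose 2) hq
  field_simp at hfrac ⊢
  linear_combination -hfrac

end Field

/-! ### Infinite products and theta series -/

section Limit

variable {a q x : ℂ}

/-- The infinite `q`-Pochhammer symbol `(a; q)_∞`, meaningful for `‖q‖ < 1`. -/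
def qPochInf (a q : ℂ) : ℂ := ∏' k : ℕ, (1 - a * q ^ k)

lemma summable_norm_neg_mul_pow (hq : ‖q‖ < 1) (a : ℂ) :
    Summable fun k : ℕ ↦ ‖-(a * q ^ k)‖ := by
  simpa only [norm_neg, norm_mul, norm_pow] using
    (summable_geometric_of_lt_one (norm_nonneg q) hq).mul_left ‖a‖

lemma multipliable_one_sub_mul_pow (hq : ‖q‖ < 1) (a : ℂ) :
    Multipliable fun k : ℕ ↦ 1 - a * q ^ k := by
  simpa only [sub_eq_add_neg] using
    multipliable_one_add_of_summable (summable_norm_neg_mul_pow hq a)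

lemma tendsto_qPoch (hq : ‖q‖ < 1) (a : ℂ) :
    Tendsto (qPoch a q) atTop (𝓝 (qPochInf a q)) :=
  (multipliable_one_sub_mul_pow hq a).hasProd.tendsto_prod_nat

lemma qPochInf_eq_one_sub_mul (hq : ‖q‖ < 1) (a : ℂ) :
    qPochInf a q = (1 - a) * qPochInf (a * q) q := by
  have h := ((tendsto_add_atTop_iff_nat 1).2 (tendsto_qPoch hq a)).congr fun n ↦ by
    rw [add_comm, qPoch_add, qPoch_succ, qPoch_zero, pow_zero, pow_one, mul_one, one_mul]
  exact tendsto_nhds_unique h ((tendsto_qPoch hq (a * q)).const_mul (1 - a))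

lemma qPochInf_mul_qPochInf_neg (hq : ‖q‖ < 1) (a : ℂ) :
    qPochInf a q * qPochInf (-a) q = qPochInf (a ^ 2) (q ^ 2) := by
  rw [qPochInf, qPochInf, ← (multipliable_one_sub_mul_pow hq a).tprod_mul
    (multipliable_one_sub_mul_pow hq (-a)), qPochInf]
  exact tprod_congr fun k ↦ by ring

lemma pow_injective_of_norm_lt_one (hq₀ : q ≠ 0) (hq : ‖q‖ < 1) :
    Function.Injective fun n : ℕ ↦ q ^ n := fun a b h ↦
  (pow_right_strictAnti₀ (norm_pos_iff.2 hq₀) hq).injective <| by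
    simpa only [norm_pow] using congrArg norm h

lemma qPochInf_self_ne_zero (hq : ‖q‖ < 1) : qPochInf q q ≠ 0 := by
  have hlt (k : ℕ) : ‖q ^ (k + 1)‖ < 1 := by
    rw [norm_pow]; exact pow_lt_one₀ (norm_nonneg q) hq k.succ_ne_zero
  have h := tprod_one_add_ne_zero_of_summable (f := fun k : ℕ ↦ -(q * q ^ k)) (fun k hk ↦ by
    have hk' : q ^ (k + 1) = 1 := by rw [pow_succ']; linear_combination -hk
    exact absurd (hlt k) (by simp [hk'])) (summable_norm_neg_mul_pow hq q)
  simpa only [qPochInf, sub_eq_add_neg] using h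

lemma qPochInf_mul_qPochInf_inv (hq : ‖q‖ < 1) (hx : x ≠ 0) :
    qPochInf (x⁻¹ * q) q * qPochInf x q = -x * (qPochInf (x * q) q * qPochInf x⁻¹ q) := by
  rw [qPochInf_eq_one_sub_mul hq x, qPochInf_eq_one_sub_mul hq x⁻¹]
  field_simp
  ring

lemma tendsto_sum_range_mul_mul {h : ℤ → ℂ} (hh : Summable h) {u : ℕ → ℂ} {L : ℂ}
    (hu : Tendsto u atTop (𝓝 L)) :
    Tendsto (fun n : ℕ ↦ ∑ i ∈ range (2 * n + 1), h (i - n) * (u i * u (2 * n - i))) atTop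
      (𝓝 ((∑' j, h j) * (L * L))) := by
  obtain ⟨C, hC⟩ := hu.norm.bddAbove_range
  have hC' (n : ℕ) : ‖u n‖ ≤ C := hC ⟨n, rfl⟩
  have hC₀ : 0 ≤ C := (norm_nonneg _).trans (hC' 0)
  let f (n : ℕ) : ℤ → ℂ := (Set.Icc (-n : ℤ) n).indicator fun j ↦
    h j * (u (n + j).toNat * u (n - j).toNat)
  have hmem (j : ℤ) : ∀ᶠ n : ℕ in atTop, j ∈ Set.Icc (-n : ℤ) n := by
    filter_upwards [eventually_ge_atTop j.natAbs] with n hn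
    rw [Set.mem_Icc]; omega
  have hshift (j : ℤ) : Tendsto (fun n : ℕ ↦ (n + j).toNat) atTop atTop :=
    tendsto_atTop.2 fun b ↦ by
      filter_upwards [eventually_ge_atTop (b + j.natAbs)] with n hn
      omega
  have hlim : Tendsto (fun n ↦ ∑' j, f n j) atTop (𝓝 (∑' j, h j * (L * L))) := by
    refine tendsto_tsum_of_dominated_convergence (bound := fun j ↦ ‖h j‖ * (C * C))
      (hh.norm.mul_right _) (fun j ↦ ?_) (.of_forall fun n j ↦ ?_)
    · refine Tendsto.congr' ((hmem j).mono fun n hn ↦ (Set.indicator_of_mem hn _).symm) ?_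
      exact ((hu.comp (hshift j)).mul (hu.comp (hshift (-j)))).const_mul _
    · refine (norm_indicator_le_norm_self _ _).trans ?_
      rw [norm_mul, norm_mul]
      gcongr <;> exact hC' _
  rw [tsum_mul_right] at hlim
  refine hlim.congr fun n ↦ ?_
  have hsupp : ∑' j, f n j = ∑ j ∈ Icc (-n : ℤ) n, f n j :=
    tsum_eq_sum fun j hj ↦ Set.indicator_of_notMem (by rwa [mem_Icc] at hj) _
  rw [hsupp]
  symm
  refine sum_bij (fun i _ ↦ (i : ℤ) - n) (fun i hi ↦ ?_) (fun _ _ _ _ h ↦ by omega)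
    (fun j hj ↦ ?_) fun i hi ↦ ?_
  · rw [mem_range] at hi; rw [mem_Icc]; omega
  · rw [mem_Icc] at hj
    exact ⟨(j + n).toNat, by rw [mem_range]; omega, by omega⟩
  · rw [mem_range] at hi
    have hval : f n (i - n) = _ := Set.indicator_of_mem (by rw [Set.mem_Icc]; omega) _
    rw [hval, show ((n : ℤ) + (i - n)).toNat = i by omega,
      show ((n : ℤ) - (i - n)).toNat = 2 * n - i by omega]

lemma triangular_cast (j : ℤ) : (triangular j : ℂ) = j * (j + 1) / 2 := by
  have h : (2 * triangular j : ℂ) = j * (j + 1) := by exact_mod_cast two_mul_triangular j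
  linear_combination h / 2

lemma summable_neg_one_zpow_mul_zpow_triangular (hq₀ : q ≠ 0) (hq : ‖q‖ < 1) (hx : x ≠ 0) :
    Summable fun j : ℤ ↦ (-1) ^ j * q ^ triangular j * x ^ j := by
  have him : 0 < (-(I * log q) / ((2 * Real.pi : ℝ) : ℂ)).im := by
    have hlog := Real.log_neg (norm_pos_iff.2 hq₀) hq
    have : 0 < -Real.log ‖q‖ := by linarith
    rw [div_ofReal_im, neg_im, I_mul_im, log_re]
    positivity
  refine ((summable_jacobiTheta₂_term_iff ((log q / 2 + log (-x)) / (2 * Real.pi * I)) _).2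
    him).congr fun j ↦ ?_
  rw [mul_right_comm ((-1 : ℂ) ^ j), ← mul_zpow, neg_one_mul, ← cpow_intCast q,
    ← cpow_intCast (-x), cpow_def_of_ne_zero hq₀, cpow_def_of_ne_zero (neg_ne_zero.2 hx),
    ← exp_add, jacobiTheta₂_term, triangular_cast]
  congr 1
  have := Complex.ofReal_ne_zero.2 Real.pi_ne_zero
  have := I_ne_zero
  push_cast
  field_simp
  linear_combination (-(j : ℂ) ^ 2 * log q) * I_sq

lemma tsum_neg_one_zpow_mul_zpow_triangular (hq₀ : q ≠ 0) (hq : ‖q‖ < 1) (hx : x ≠ 0) :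
    ∑' j : ℤ, (-1) ^ j * q ^ triangular j * x ^ j =
      qPochInf q q * (qPochInf (x * q) q * qPochInf x⁻¹ q) := by
  have hinj := pow_injective_of_norm_lt_one hq₀ hq
  have hP := qPochInf_self_ne_zero hq
  have hsum := tendsto_sum_range_mul_mul (summable_neg_one_zpow_mul_zpow_triangular hq₀ hq hx)
    ((tendsto_qPoch hq q).inv₀ hP)
  have hP2 : Tendsto (fun n ↦ qPoch q q (2 * n)) atTop (𝓝 (qPochInf q q)) :=
    (tendsto_qPoch hq q).comp (tendsto_id.const_mul_atTop' two_pos)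
  have hfin (n : ℕ) : qPoch (x * q) q n * qPoch x⁻¹ q n = qPoch q q (2 * n) *
      ∑ i ∈ range (2 * n + 1), (-1) ^ ((i : ℤ) - n) * q ^ triangular (i - n) * x ^ ((i : ℤ) - n) *
        ((qPoch q q i)⁻¹ * (qPoch q q (2 * n - i))⁻¹) := by
    rw [qPoch_mul_qPoch_inv_eq_sum hq₀ hx, mul_sum]
    refine sum_congr rfl fun i hi ↦ ?_
    have hbinom := qPoch_mul_qPoch_mul_qBinom q i (2 * n - i)
    rw [Nat.add_sub_cancel' (Nat.lt_succ_iff.1 (mem_range.1 hi))] at hbinom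
    have := qPoch_self_ne_zero hinj i
    have := qPoch_self_ne_zero hinj (2 * n - i)
    rw [← hbinom]
    field_simp
  have hlim := tendsto_nhds_unique ((tendsto_qPoch hq (x * q)).mul (tendsto_qPoch hq x⁻¹))
    ((hP2.mul hsum).congr fun n ↦ (hfin n).symm)
  rw [hlim]
  field_simp

lemma exists_norm_inv_one_sub_le (hq₀ : q ≠ 0) (hq : ‖q‖ < 1) (hx : x ≠ 0) :
    ∃ C : ℝ, ∀ j : ℤ, ‖(1 - x * q ^ j)⁻¹‖ ≤ C := by
  have hpow : Tendsto (fun n : ℕ ↦ q ^ n) atTop (𝓝 0) :=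
    tendsto_pow_atTop_nhds_zero_of_norm_lt_one hq
  have hpos : Tendsto (fun n : ℕ ↦ (1 - x * q ^ n)⁻¹) atTop (𝓝 (1 - x * 0)⁻¹) :=
    ((hpow.const_mul x).const_sub 1).inv₀ (by simp)
  have hneg : Tendsto (fun n : ℕ ↦ q ^ n / (q ^ n - x)) atTop (𝓝 (0 / (0 - x))) :=
    hpow.div (hpow.sub_const x) (by simpa using hx)
  obtain ⟨C₁, hC₁⟩ := hpos.norm.bddAbove_range
  obtain ⟨C₂, hC₂⟩ := hneg.norm.bddAbove_range
  refine ⟨max C₁ C₂, fun j ↦ ?_⟩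
  obtain ⟨n, rfl | rfl⟩ := j.eq_nat_or_neg
  · rw [zpow_natCast]
    exact (hC₁ ⟨n, rfl⟩).trans (le_max_left _ _)
  · have hinv : (1 - x * q ^ (-(n : ℤ)))⁻¹ = q ^ n / (q ^ n - x) := by
      rw [zpow_neg, zpow_natCast, ← div_eq_mul_inv, one_sub_div (pow_ne_zero n hq₀), inv_div]
    rw [hinv]
    exact (hC₂ ⟨n, rfl⟩).trans (le_max_right _ _)

/-- Partial fractions for the reciprocal of the theta function, with the denominators cleared. -/
lemma qPochInf_self_sq_eq (hq₀ : q ≠ 0) (hq : ‖q‖ < 1) (hx : x ≠ 0)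
    (hxq : ∀ j : ℤ, x * q ^ j ≠ 1) :
    qPochInf q q ^ 2 = -x * (qPochInf (x * q) q * qPochInf x⁻¹ q) *
      ∑' j : ℤ, (-1) ^ j * q ^ triangular j / (1 - x * q ^ j) := by
  obtain ⟨C, hC⟩ := exists_norm_inv_one_sub_le hq₀ hq hx
  have hsummable : Summable fun j : ℤ ↦ (-1) ^ j * q ^ triangular j / (1 - x * q ^ j) := by
    refine .of_norm_bounded ((summable_neg_one_zpow_mul_zpow_triangular hq₀ hq
      one_ne_zero).norm.mul_right C) fun j ↦ ?_
    rw [div_eq_mul_inv, norm_mul, one_zpow, mul_one]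
    exact mul_le_mul_of_nonneg_left (hC j) (norm_nonneg _)
  have hP := qPochInf_self_ne_zero hq
  have hlim := (((tendsto_qPoch hq (x⁻¹ * q)).mul ((tendsto_add_atTop_iff_nat 1).2
    (tendsto_qPoch hq x))).mul (tendsto_sum_range_mul_mul hsummable
      ((tendsto_qPoch hq q).inv₀ hP)))
  have heq := tendsto_nhds_unique tendsto_const_nhds (hlim.congr fun n ↦
    qPoch_mul_qPoch_mul_sum_eq_one hq₀ (pow_injective_of_norm_lt_one hq₀ hq) hx hxq n)
  rw [qPochInf_mul_qPochInf_inv hq hx] at heq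
  field_simp at heq ⊢
  exact heq

end Limit

/-! ### Theta constants and the Dedekind eta function -/

lemma e2_add (a b : ℂ) : e2 (a + b) = e2 a * e2 b := by
  rw [e2, e2, e2, ← Complex.exp_add, mul_add]

lemma e2_ne_zero (a : ℂ) : e2 a ≠ 0 := Complex.exp_ne_zero _

lemma e2_zpow (a : ℂ) (j : ℤ) : e2 a ^ j = e2 (j * a) := by
  rw [e2, e2, ← Complex.exp_int_mul, mul_left_comm]

lemma e2_pow (a : ℂ) (n : ℕ) : e2 a ^ n = e2 (n * a) := mod_cast e2_zpow a n

lemma e2_eq_one_iff {a : ℂ} : e2 a = 1 ↔ ∃ n : ℤ, a = n := by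
  simp only [e2, Complex.exp_eq_one_iff, mul_comm _ (2 * (Real.pi : ℂ) * I),
    mul_right_inj' Complex.two_pi_I_ne_zero]

lemma e2_add_intCast (a : ℂ) (n : ℤ) : e2 (a + n) = e2 a := by
  rw [e2_add, e2_eq_one_iff.2 ⟨n, rfl⟩, mul_one]

lemma e2_half : e2 (1 / 2) = -1 := by
  rw [e2, ← Complex.exp_pi_mul_I]
  congr 1
  ring

lemma e2_quarter : e2 (1 / 4) = I := by
  rw [e2, show 2 * (Real.pi : ℂ) * I * (1 / 4) = Real.pi / 2 * I by ring,
    Complex.exp_pi_div_two_mul_I]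

lemma e2_intCast_div_two (n : ℤ) : e2 (n / 2) = (-1) ^ n := by
  rw [← e2_half, e2_zpow, mul_one_div]

lemma e2_add_half (a : ℂ) : e2 (a + 1 / 2) = -e2 a := by rw [e2_add, e2_half, mul_neg_one]

lemma norm_e2 (a : ℂ) : ‖e2 a‖ = Real.exp (-(2 * Real.pi) * a.im) := by
  rw [e2, Complex.norm_exp]
  simp

lemma norm_e2_lt_one {τ : ℂ} (hτ : 0 < τ.im) : ‖e2 τ‖ < 1 := by
  rw [norm_e2, Real.exp_lt_one_iff, neg_mul, neg_lt_zero]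
  positivity

lemma qpow_eq_e2 (τ x : ℂ) : qpow τ x = e2 (τ * x) := by rw [qpow, e2, mul_assoc]

lemma eta_eq_qPochInf (τ : ℂ) : eta τ = e2 (τ / 24) * qPochInf (e2 τ) (e2 τ) := by
  rw [eta, qPochInf, qpow_eq_e2, mul_one_div]
  congr 1
  refine tprod_congr fun n ↦ ?_
  rw [qpow_eq_e2, ← pow_succ', e2_pow]
  push_cast
  ring_nf

lemma eta_sq_mul_eta_two_mul_sq (τ : ℂ) :
    eta τ ^ 2 * eta (2 * τ) ^ 2 = e2 (τ / 4) * qPochInf (e2 τ) (e2 τ) ^ 2 *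
      qPochInf (e2 (2 * τ)) (e2 (2 * τ)) ^ 2 := by
  have h : e2 (τ / 24) ^ 2 * e2 (2 * τ / 24) ^ 2 = e2 (τ / 4) := by
    rw [e2_pow, e2_pow, ← e2_add]
    congr 1
    push_cast
    ring
  rw [eta_eq_qPochInf, eta_eq_qPochInf, ← h]
  ring

lemma mumford_one_zero_eq_qPochInf {τ : ℂ} (hτ : 0 < τ.im) (z : ℂ) :
    mumford 1 0 τ z = e2 (τ / 8 + z / 2) * (qPochInf (e2 τ) (e2 τ) *
      (qPochInf (-e2 z * e2 τ) (e2 τ) * qPochInf (-(e2 z)⁻¹) (e2 τ))) := by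
  rw [← inv_neg, ← tsum_neg_one_zpow_mul_zpow_triangular (e2_ne_zero τ) (norm_e2_lt_one hτ)
    (neg_ne_zero.2 (e2_ne_zero z)), ← tsum_mul_left, mumford]
  refine tsum_congr fun n ↦ ?_
  rw [mul_right_comm ((-1 : ℂ) ^ n), ← mul_zpow, neg_one_mul, neg_neg, e2_zpow, e2_zpow,
    triangular_cast, ← e2_add, ← e2_add, e2]
  congr 1
  push_cast
  ring

lemma mumford_one_one_eq_mumford_one_zero (τ z : ℂ) :
    mumford 1 1 τ z = mumford 1 0 τ (z + 1 / 2) := by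
  simp only [mumford, Nat.cast_one, Nat.cast_zero, zero_div, add_zero]

lemma mumford_one_one_mul_mumford_one_zero {τ : ℂ} (hτ : 0 < τ.im) (z : ℂ) :
    mumford 1 1 τ z * mumford 1 0 τ z =
      I * e2 (τ / 4) * e2 z * qPochInf (e2 τ) (e2 τ) ^ 2 *
        (qPochInf (e2 (2 * z) * e2 (2 * τ)) (e2 (2 * τ)) *
          qPochInf (e2 (2 * z))⁻¹ (e2 (2 * τ))) := by
  have hq := norm_e2_lt_one hτ
  have hpow (w : ℂ) : e2 (2 * w) = e2 w ^ 2 := by rw [e2_pow, Nat.cast_ofNat]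
  have hprefactor : e2 (τ / 8 + (z + 1 / 2) / 2) * e2 (τ / 8 + z / 2) =
      I * e2 (τ / 4) * e2 z := by
    rw [← e2_quarter, ← e2_add, ← e2_add, ← e2_add]
    congr 1
    ring
  rw [hpow, hpow, ← mul_pow, ← inv_pow, ← qPochInf_mul_qPochInf_neg hq,
    ← qPochInf_mul_qPochInf_neg hq, mumford_one_one_eq_mumford_one_zero,
    mumford_one_zero_eq_qPochInf hτ, mumford_one_zero_eq_qPochInf hτ, e2_add_half, inv_neg,
    neg_neg, neg_neg, neg_mul, ← hprefactor]
  ring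

lemma jacobiTheta₂_term_eq_e2 (n : ℤ) (z τ : ℂ) :
    jacobiTheta₂_term n z τ = e2 (n * z + n ^ 2 * τ / 2) := by
  rw [jacobiTheta₂_term, e2]
  congr 1
  ring

/-- The general term of the Appell–Lerch sum `∑ⱼ e^{2πi(jv + j²σ/2)} / (1 - e^{2πiw} qʲ)`, whose
numerator is the general term of `jacobiTheta₂ v σ`. -/
def appellTerm (v σ τ w : ℂ) (j : ℤ) : ℂ := jacobiTheta₂_term j v σ / (1 - e2 (w + j * τ))

lemma e2_mul_tsum_appellTerm_half {τ : ℂ} (hτ : 0 < τ.im) {z : ℂ}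
    (hz : ∀ j : ℤ, e2 (2 * z + j * (2 * τ)) ≠ 1) :
    e2 z * ∑' j, appellTerm (1 / 2 + τ) (2 * τ) (2 * τ) (2 * z) j =
      -I * eta τ ^ 2 * eta (2 * τ) ^ 2 / (mumford 1 1 τ z * mumford 1 0 τ z) := by
  have hτ2 : 0 < (2 * τ).im := by simpa using hτ
  have hP2 := qPochInf_self_ne_zero (norm_e2_lt_one hτ2)
  have hden (j : ℤ) : e2 (2 * z) * e2 (2 * τ) ^ j = e2 (2 * z + j * (2 * τ)) := by
    rw [e2_zpow, e2_add]
  have hrecip := qPochInf_self_sq_eq (e2_ne_zero (2 * τ)) (norm_e2_lt_one hτ2)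
    (e2_ne_zero (2 * z)) fun j ↦ by rw [hden]; exact hz j
  have hsum : ∑' j, appellTerm (1 / 2 + τ) (2 * τ) (2 * τ) (2 * z) j =
      ∑' j : ℤ, (-1 : ℂ) ^ j * e2 (2 * τ) ^ triangular j / (1 - e2 (2 * z) * e2 (2 * τ) ^ j) := by
    refine tsum_congr fun j ↦ ?_
    rw [hden, appellTerm, jacobiTheta₂_term_eq_e2, ← e2_intCast_div_two, e2_zpow, triangular_cast,
      ← e2_add]
    congr 2
    ring
  have hΘ : qPochInf (e2 (2 * z) * e2 (2 * τ)) (e2 (2 * τ)) *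
      qPochInf (e2 (2 * z))⁻¹ (e2 (2 * τ)) ≠ 0 := by
    intro h
    rw [h, mul_zero, zero_mul] at hrecip
    exact pow_ne_zero 2 hP2 hrecip
  have he2z : e2 (2 * z) = e2 z ^ 2 := by rw [e2_pow, Nat.cast_ofNat]
  have hprefactor : I * e2 (τ / 4) * e2 z * qPochInf (e2 τ) (e2 τ) ^ 2 ≠ 0 := by
    simp [e2_ne_zero, qPochInf_self_ne_zero (norm_e2_lt_one hτ)]
  rw [hsum, mumford_one_one_mul_mumford_one_zero hτ, eq_div_iff (mul_ne_zero hprefactor hΘ),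
    mul_assoc (-I), eta_sq_mul_eta_two_mul_sq, hrecip, he2z]
  ring

/-! ### The mock theta functions as Appell–Lerch sums -/

lemma e2_two_mul_add_ne_one {τ z : ℂ} (hz : ¬ InLattice τ z) (hz' : ¬ InLattice τ (z + 1 / 2))
    (j : ℤ) : e2 (2 * z + j * (2 * τ)) ≠ 1 := by
  rw [show 2 * z + j * (2 * τ) = (2 : ℕ) * (z + j * τ) by push_cast; ring, ← e2_pow,
    sq_ne_one_iff, Ne, Ne, ← neg_eq_iff_eq_neg, ← e2_add_half, e2_eq_one_iff, e2_eq_one_iff]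
  constructor
  · rintro ⟨n, hn⟩
    exact hz ⟨n, -j, by push_cast; linear_combination hn⟩
  · rintro ⟨n, hn⟩
    exact hz' ⟨n, -j, by push_cast; linear_combination hn⟩

lemma im_two_mul_natCast_mul_pos {m : ℕ} (hm : 0 < m) {τ : ℂ} (hτ : 0 < τ.im) :
    0 < (2 * m * τ).im := by
  rw [show (2 * m * τ : ℂ) = (2 * m : ℝ) * τ by push_cast; rfl, Complex.im_ofReal_mul]
  positivity

lemma im_div_two_mul_natCast_pos {m : ℕ} (hm : 0 < m) {τ : ℂ} (hτ : 0 < τ.im) :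
    0 < (τ / (2 * m)).im := by
  rw [show (2 * m : ℂ) = (2 * m : ℝ) by push_cast; rfl, Complex.div_ofReal_im]
  positivity

lemma summable_norm_jacobiTheta₂_term {σ : ℂ} (hσ : 0 < σ.im) (v : ℂ) :
    Summable fun n : ℤ ↦ ‖jacobiTheta₂_term n v σ‖ :=
  ((summable_jacobiTheta₂_term_iff v σ).2 hσ).norm

lemma summable_norm_appellTerm {σ τ : ℂ} (hσ : 0 < σ.im) (hτ : 0 < τ.im) (v w : ℂ) :
    Summable fun j ↦ ‖appellTerm v σ τ w j‖ := by
  obtain ⟨C, hC⟩ := exists_norm_inv_one_sub_le (e2_ne_zero τ) (norm_e2_lt_one hτ) (e2_ne_zero w)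
  refine .of_nonneg_of_le (fun _ ↦ norm_nonneg _) (fun j ↦ ?_)
    ((summable_norm_jacobiTheta₂_term hσ v).mul_right C)
  rw [appellTerm, div_eq_mul_inv, norm_mul, e2_add, ← e2_zpow]
  exact mul_le_mul_of_nonneg_left (hC j) (norm_nonneg _)

lemma appellTerm_sub_appellTerm_add_half {τ z : ℂ} (hz : ∀ j : ℤ, e2 (2 * z + j * (2 * τ)) ≠ 1)
    (v σ : ℂ) (j : ℤ) :
    appellTerm v σ τ z j - appellTerm v σ τ (z + 1 / 2) j =
      2 * (e2 z * appellTerm (v + τ) σ (2 * τ) (2 * z) j) := by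
  have hsq : e2 (2 * z + j * (2 * τ)) = e2 (z + j * τ) ^ 2 := by
    rw [e2_pow]
    push_cast
    ring_nf
  have hneg : e2 (z + 1 / 2 + j * τ) = -e2 (z + j * τ) := by rw [add_right_comm, e2_add_half]
  have hnum : e2 z * jacobiTheta₂_term j (v + τ) σ =
      jacobiTheta₂_term j v σ * e2 (z + j * τ) := by
    rw [jacobiTheta₂_term_eq_e2, jacobiTheta₂_term_eq_e2, ← e2_add, ← e2_add]
    ring_nf
  have hne := hz j
  rw [appellTerm, appellTerm, appellTerm, ← mul_div_assoc (e2 z), hnum, hneg, hsq]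
  rw [hsq] at hne
  obtain ⟨hne₁, hne₂⟩ := sq_ne_one_iff.1 hne
  have h₁ : 1 - e2 (z + j * τ) ≠ 0 := sub_ne_zero.2 hne₁.symm
  have h₂ : 1 + e2 (z + j * τ) ≠ 0 := fun h ↦ hne₂ (eq_neg_of_add_eq_zero_right h)
  have h₁₂ : 1 - e2 (z + j * τ) ^ 2 ≠ 0 := sub_ne_zero.2 hne.symm
  rw [sub_neg_eq_add]
  field_simp
  ring

lemma Phi1_zero_zero (m τ z w : ℂ) :
    Phi1 m 0 τ z w 0 = ∑' j, appellTerm (m * (z + w)) (2 * m * τ) τ z j := by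
  rw [Phi1, mul_zero, Complex.exp_zero, one_mul]
  refine tsum_congr fun j ↦ ?_
  rw [appellTerm, jacobiTheta₂_term_eq_e2, qpow_eq_e2, qpow_eq_e2, ← e2, ← e2_add, ← e2_add,
    mul_comm τ]
  ring_nf

lemma Phi2_eq_Phi1 (m s τ z w t : ℂ) : Phi2 m s τ z w t = Phi1 m s τ (-w) (-z) t := by
  rw [Phi1, Phi2]
  congr 1
  refine tsum_congr fun j ↦ ?_
  ring_nf

lemma Phi1_sub_Phi1_half {m : ℕ} (hm : 0 < m) {τ z : ℂ} (hτ : 0 < τ.im)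
    (hz : ∀ j : ℤ, e2 (2 * z + j * (2 * τ)) ≠ 1) (w : ℂ) :
    Phi1 m 0 τ z (-w) 0 - Phi1 m 0 τ (z + 1 / 2) (-w - 1 / 2) 0 =
      2 * (e2 z * ∑' j, appellTerm (m * (z - w) + τ) (2 * m * τ) (2 * τ) (2 * z) j) := by
  have hσ := im_two_mul_natCast_mul_pos hm hτ
  rw [Phi1_zero_zero, Phi1_zero_zero, show z + 1 / 2 + (-w - 1 / 2) = z - w by ring,
    ← sub_eq_add_neg, ← (summable_norm_appellTerm hσ hτ _ _).of_norm.tsum_sub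
      (summable_norm_appellTerm hσ hτ _ _).of_norm, ← tsum_mul_left, ← tsum_mul_left]
  exact tsum_congr (appellTerm_sub_appellTerm_add_half hz _ _)

lemma Phi_sub_Phi_half {m : ℕ} (hm : 0 < m) {τ z w : ℂ} (hτ : 0 < τ.im)
    (hz : ∀ j : ℤ, e2 (2 * z + j * (2 * τ)) ≠ 1) (hw : ∀ j : ℤ, e2 (2 * w + j * (2 * τ)) ≠ 1) :
    Phi m 0 τ z (-w) 0 - Phi m 0 τ (z + 1 / 2) (-w - 1 / 2) 0 =
      2 * (e2 z * ∑' j, appellTerm (m * (z - w) + τ) (2 * m * τ) (2 * τ) (2 * z) j) -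
        2 * (e2 w * ∑' j, appellTerm (m * (w - z) + τ) (2 * m * τ) (2 * τ) (2 * w) j) := by
  rw [← Phi1_sub_Phi1_half hm hτ hz, ← Phi1_sub_Phi1_half hm hτ hw, Phi, Phi, Phi2_eq_Phi1,
    Phi2_eq_Phi1, neg_neg, neg_sub, sub_neg_eq_add, add_comm (1 / 2) w, neg_add']
  ring

lemma jTheta_eq_e2_mul_jacobiTheta₂ {m : ℂ} (hm : m ≠ 0) (k τ z : ℂ) :
    jTheta k m τ z =
      e2 (k * z / 2 + k ^ 2 * τ / (4 * m)) * jacobiTheta₂ (m * z + k * τ) (2 * m * τ) := by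
  rw [jTheta, jacobiTheta₂, ← tsum_mul_left]
  refine tsum_congr fun j ↦ ?_
  rw [jacobiTheta₂_term_eq_e2, qpow_eq_e2, ← e2, ← e2_add, ← e2_add]
  congr 1
  field_simp
  ring

lemma jTheta_zero {m : ℂ} (hm : m ≠ 0) (τ z : ℂ) :
    jTheta 0 m τ (z / m) = jacobiTheta₂ z (2 * m * τ) := by
  rw [jTheta_eq_e2_mul_jacobiTheta₂ hm, mul_div_cancel₀ _ hm]
  simp [e2]

/-! ### Products of theta functions and Appell–Lerch sums as triple series -/

/-- `1` if `a ≤ i < b`, `-1` if `b ≤ i < a` and `0` otherwise: the coefficients of the Laurent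
polynomial `(X ^ a - X ^ b) / (1 - X)`. -/
def signedIndicator (a b i : ℤ) : ℂ :=
  (Set.Iio b).indicator 1 i - (Set.Iio a).indicator 1 i

lemma signedIndicator_add_one (a b i : ℤ) :
    signedIndicator a (b + 1) i = signedIndicator a b i + if i = b then 1 else 0 := by
  simp only [signedIndicator, Set.indicator_apply, Set.mem_Iio, Pi.one_apply]
  grind

lemma hasSum_signedIndicator_mul_zpow {X : ℂ} (hX₀ : X ≠ 0) (hX : X ≠ 1) (a b : ℤ) :
    HasSum (fun i ↦ signedIndicator a b i * X ^ i) ((X ^ a - X ^ b) / (1 - X)) := by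
  have hX' : 1 - X ≠ 0 := sub_ne_zero.2 hX.symm
  have hsucc (b i : ℤ) : signedIndicator a (b + 1) i * X ^ i =
      signedIndicator a b i * X ^ i + if i = b then X ^ b else 0 := by
    rw [signedIndicator_add_one, add_mul]
    split_ifs with h
    · rw [h, one_mul]
    · rw [zero_mul]
  refine Int.inductionOn' b a (by simp [signedIndicator]) (fun b _ ih ↦ ?_) fun b _ ih ↦ ?_
  · rw [funext (hsucc b), show (X ^ a - X ^ (b + 1)) / (1 - X) =
      (X ^ a - X ^ b) / (1 - X) + X ^ b by rw [zpow_add_one₀ hX₀]; field_simp; ring]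
    exact ih.add (hasSum_ite_eq b _)
  · obtain ⟨b, rfl⟩ : ∃ c, b = c + 1 := ⟨b - 1, by ring⟩
    rw [add_sub_cancel_right, funext fun i ↦ eq_sub_of_add_eq (hsucc b i).symm,
      show (X ^ a - X ^ b) / (1 - X) = (X ^ a - X ^ (b + 1)) / (1 - X) - X ^ b by
        rw [zpow_add_one₀ hX₀]; field_simp; ring]
    exact ih.sub (hasSum_ite_eq b _)

/-- The triple series which, summed over `i` first, is a difference of products of theta functions
and Appell–Lerch sums and, summed over `i` last, is a theta series. -/
def tripleTerm (m : ℕ) (τ z d : ℂ) (x : (ℤ × ℤ) × ℤ) : ℂ :=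
  signedIndicator (m * x.1.1) x.1.2 x.2 * (e2 ((2 * x.2 + 1) * z) *
    jacobiTheta₂_term x.1.1 (1 / 2 + (2 * x.2 + 1) * τ) (2 * τ) *
    jacobiTheta₂_term x.1.2 (m * d + (2 * x.2 + 1) * τ) (2 * m * τ))

lemma norm_e2_mul_le_of_le {τ : ℂ} (hτ : 0 < τ.im) {x y : ℝ} (hxy : x ≤ y) :
    ‖e2 (y * τ)‖ ≤ ‖e2 (x * τ)‖ := by
  rw [norm_e2, norm_e2, Complex.im_ofReal_mul, Complex.im_ofReal_mul, Real.exp_le_exp]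
  have := mul_le_mul_of_nonneg_right hxy hτ.le
  nlinarith [Real.pi_pos]

lemma sq_add_sq_add_sq_div_le_of_le_of_le {M n l i : ℝ} (hM : 1 ≤ M) (hn : M * n ≤ i)
    (hl : i ≤ l) :
    (n ^ 2 + l ^ 2 + i ^ 2) / (4 * M) ≤ M * l ^ 2 + n ^ 2 + 2 * i * (n + l) := by
  rw [div_le_iff₀ (by linarith)]
  rcases le_total 0 i with hi | hi
  · have hil : 0 ≤ i * (l - i) := mul_nonneg hi (by linarith)
    have hform : (n ^ 2 + l ^ 2 + i ^ 2) / 4 ≤ M * l ^ 2 + n ^ 2 + 2 * i * (n + l) := by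
      nlinarith [sq_nonneg (3 * n + 4 * i), mul_nonneg (sub_nonneg.2 hM) (sq_nonneg l)]
    have hnonneg : 0 ≤ (n ^ 2 + l ^ 2 + i ^ 2) / 4 := by positivity
    nlinarith [hnonneg]
  · have hin : 0 ≤ (i - M * n) * (-i) := mul_nonneg (by linarith) (by linarith)
    have hn2 : 0 ≤ (M - 1) * n ^ 2 := mul_nonneg (by linarith) (sq_nonneg _)
    have hl2 : l ^ 2 ≤ (M * l) ^ 2 := by
      rw [mul_pow]
      exact le_mul_of_one_le_left (sq_nonneg l) (one_le_pow₀ hM)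
    nlinarith [sq_nonneg (3 * (M * l) + 4 * i), sq_nonneg n, sq_nonneg i]

lemma sq_add_sq_add_sq_div_le {M n l i : ℝ} (hM : 1 ≤ M)
    (h : M * n ≤ i ∧ i ≤ l ∨ l ≤ i ∧ i ≤ M * n) :
    (n ^ 2 + l ^ 2 + i ^ 2) / (4 * M) ≤ M * l ^ 2 + n ^ 2 + 2 * i * (n + l) := by
  rcases h with ⟨hn, hl⟩ | ⟨hl, hn⟩
  · exact sq_add_sq_add_sq_div_le_of_le_of_le hM hn hl
  · have := sq_add_sq_add_sq_div_le_of_le_of_le (n := -n) (l := -l) (i := -i) hM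
      (by linarith) (by linarith)
    simpa only [neg_sq, ← neg_add, mul_neg, neg_mul, neg_neg] using this

lemma norm_tripleTerm_le {m : ℕ} (hm : 0 < m) {τ : ℂ} (hτ : 0 < τ.im) (z d : ℂ) (n l i : ℤ) :
    ‖tripleTerm m τ z d ((n, l), i)‖ ≤ ‖e2 z‖ * (‖jacobiTheta₂_term n (1 / 2 + τ) (τ / (2 * m))‖ *
      ‖jacobiTheta₂_term l (m * d + τ) (τ / (2 * m))‖ *
      ‖jacobiTheta₂_term i (2 * z) (τ / (2 * m))‖) := by
  by_cases hsupp : m * n ≤ i ∧ i < l ∨ l ≤ i ∧ i < m * n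
  · have hone : ‖signedIndicator (m * n) l i‖ = 1 := by
      simp only [signedIndicator, Set.indicator_apply, Set.mem_Iio, Pi.one_apply]
      rcases hsupp with h | h
      · simp [h.1.not_gt, h.2]
      · simp [h.1.not_gt, h.2]
    have hcone : (m : ℝ) * n ≤ i ∧ (i : ℝ) ≤ l ∨ (l : ℝ) ≤ i ∧ (i : ℝ) ≤ m * n := by
      exact_mod_cast hsupp.imp (And.imp_right le_of_lt) (And.imp_right le_of_lt)
    have hform := norm_e2_mul_le_of_le hτ
      (sq_add_sq_add_sq_div_le (mod_cast hm : (1 : ℝ) ≤ m) hcone)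
    rw [tripleTerm, norm_mul, hone, one_mul, ← norm_mul, ← norm_mul, ← norm_mul]
    simp only [jacobiTheta₂_term_eq_e2, ← e2_add]
    have hm' : (m : ℂ) ≠ 0 := mod_cast hm.ne'
    calc _ = ‖e2 ((m * l ^ 2 + n ^ 2 + 2 * i * (n + l) : ℝ) * τ)‖ *
          ‖e2 (z + n * (1 / 2 + τ) + l * (m * d + τ) + i * (2 * z))‖ := by
          rw [← norm_mul, ← e2_add]
          push_cast
          ring_nf
      _ ≤ _ := mul_le_mul_of_nonneg_right hform (norm_nonneg _)
      _ = _ := by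
          rw [← norm_mul, ← e2_add]
          push_cast
          congr 2
          field_simp
          ring
  · have hzero : signedIndicator (m * n) l i = 0 := by
      simp only [signedIndicator, Set.indicator_apply, Set.mem_Iio, Pi.one_apply]
      grind
    rw [tripleTerm, hzero, zero_mul, norm_zero]
    positivity

lemma summable_tripleTerm {m : ℕ} (hm : 0 < m) {τ : ℂ} (hτ : 0 < τ.im) (z d : ℂ) :
    Summable (tripleTerm m τ z d) := by
  have hσ := im_div_two_mul_natCast_pos hm hτ
  have hsum (v : ℂ) := summable_norm_jacobiTheta₂_term hσ v
  exact .of_norm_bounded (((((hsum _).mul_of_nonneg (hsum _) (fun _ ↦ norm_nonneg _)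
    fun _ ↦ norm_nonneg _).mul_of_nonneg (hsum _)
      (fun _ ↦ mul_nonneg (norm_nonneg _) (norm_nonneg _)) fun _ ↦ norm_nonneg _)).mul_left _)
    fun x ↦ norm_tripleTerm_le hm hτ z d x.1.1 x.1.2 x.2

lemma hasSum_tripleTerm_fst {m : ℕ} {τ z d : ℂ} (hz : ∀ j : ℤ, e2 (2 * z + j * (2 * τ)) ≠ 1)
    (n l : ℤ) :
    HasSum (fun i ↦ tripleTerm m τ z d ((n, l), i))
      (e2 z * (jacobiTheta₂_term n (1 / 2 + m * (2 * z - d)) (2 * (m + 1) * τ) *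
          appellTerm (m * d + τ) (2 * m * τ) (2 * τ) (2 * z) (n + l) -
        jacobiTheta₂_term l (1 / 2 + 2 * z + m * d) (2 * (m + 1) * τ) *
          appellTerm (1 / 2 + τ) (2 * τ) (2 * τ) (2 * z) (l + n))) := by
  set X := e2 (2 * z + (n + l : ℤ) * (2 * τ)) with hX
  set P := e2 (z + n / 2 + (n + l) * τ + m * l * d + (m * l ^ 2 + n ^ 2) * τ) with hP
  have hterm (i : ℤ) :
      tripleTerm m τ z d ((n, l), i) = P * (signedIndicator (m * n) l i * X ^ i) := by
    simp only [tripleTerm, jacobiTheta₂_term_eq_e2]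
    rw [hP, hX, e2_zpow, mul_left_comm P, ← e2_add, ← e2_add, ← e2_add]
    push_cast
    ring_nf
  have hleft : P * X ^ (m * n) = e2 z *
      (jacobiTheta₂_term n (1 / 2 + m * (2 * z - d)) (2 * (m + 1) * τ) *
        jacobiTheta₂_term (n + l) (m * d + τ) (2 * m * τ)) := by
    rw [jacobiTheta₂_term_eq_e2, jacobiTheta₂_term_eq_e2, hP, hX, e2_zpow, ← e2_add, ← e2_add,
      ← e2_add]
    push_cast
    ring_nf
  have hright : P * X ^ l = e2 z *
      (jacobiTheta₂_term l (1 / 2 + 2 * z + m * d) (2 * (m + 1) * τ) *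
        jacobiTheta₂_term (n + l) (1 / 2 + τ) (2 * τ)) := by
    rw [jacobiTheta₂_term_eq_e2, jacobiTheta₂_term_eq_e2, hP, hX, e2_zpow, ← e2_add, ← e2_add,
      ← e2_add, ← e2_add_intCast _ l]
    push_cast
    ring_nf
  rw [funext hterm]
  rw [appellTerm, appellTerm, add_comm l n, ← hX, mul_div_assoc', mul_div_assoc', ← sub_div,
    mul_div_assoc', mul_sub (e2 z), ← hleft, ← hright, ← mul_sub, mul_div_assoc]
  exact (hasSum_signedIndicator_mul_zpow (e2_ne_zero _) (hz (n + l)) (m * n) l).mul_left P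

lemma hasSum_mul_add {G R : Type*} [AddGroup G] [NormedRing R] [CompleteSpace R] {f g : G → R}
    (hf : Summable fun a ↦ ‖f a‖) (hg : Summable fun a ↦ ‖g a‖) :
    HasSum (fun x : G × G ↦ f x.1 * g (x.1 + x.2)) ((∑' a, f a) * ∑' a, g a) :=
  ((Equiv.refl G).prodShear Equiv.addLeft).hasSum_iff.2 <|
    hf.of_norm.hasSum.mul hg.of_norm.hasSum (summable_mul_of_summable_norm hf hg)

lemma hasSum_tripleTerm {m : ℕ} (hm : 0 < m) {τ : ℂ} (hτ : 0 < τ.im) {z : ℂ}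
    (hz : ∀ j : ℤ, e2 (2 * z + j * (2 * τ)) ≠ 1) (d : ℂ) :
    HasSum (tripleTerm m τ z d)
      (e2 z * (jacobiTheta₂ (1 / 2 + m * (2 * z - d)) (2 * (m + 1) * τ) *
          ∑' j, appellTerm (m * d + τ) (2 * m * τ) (2 * τ) (2 * z) j -
        jacobiTheta₂ (1 / 2 + 2 * z + m * d) (2 * (m + 1) * τ) *
          ∑' j, appellTerm (1 / 2 + τ) (2 * τ) (2 * τ) (2 * z) j)) := by
  have hτ2 : 0 < (2 * τ).im := by simpa using hτ
  have hσ : 0 < (2 * (m + 1) * τ).im := mod_cast im_two_mul_natCast_mul_pos m.succ_pos hτ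
  have hleft := hasSum_mul_add (summable_norm_jacobiTheta₂_term hσ (1 / 2 + m * (2 * z - d)))
    (summable_norm_appellTerm (im_two_mul_natCast_mul_pos hm hτ) hτ2 (m * d + τ) (2 * z))
  have hright := hasSum_mul_add (summable_norm_jacobiTheta₂_term hσ (1 / 2 + 2 * z + m * d))
    (summable_norm_appellTerm hτ2 hτ2 (1 / 2 + τ) (2 * z))
  have hsum := (summable_tripleTerm hm hτ z d).hasSum
  have hfiber := hsum.prod_fiberwise fun x ↦ hasSum_tripleTerm_fst hz x.1 x.2
  rwa [hfiber.unique ((hleft.sub ((Equiv.prodComm ℤ ℤ).hasSum_iff.2 hright)).mul_left (e2 z))]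
    at hsum

lemma hasSum_tripleTerm_sub {m : ℕ} (hm : 0 < m) {τ : ℂ} (hτ : 0 < τ.im) {z : ℂ}
    (hz : ∀ j : ℤ, e2 (2 * z + j * (2 * τ)) ≠ 1) (w : ℂ) :
    HasSum (tripleTerm m τ z (z - w))
      (jTheta 0 (m + 1) τ ((-(1 / 2) + m * (z + w)) / (m + 1)) *
          (e2 z * ∑' j, appellTerm (m * (z - w) + τ) (2 * m * τ) (2 * τ) (2 * z) j) +
        I * eta τ ^ 2 * eta (2 * τ) ^ 2 *
          (jTheta 0 (m + 1) τ ((1 / 2 + z + w) / (m + 1) + z - w) /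
            (mumford 1 1 τ z * mumford 1 0 τ z))) := by
  have hm' : (m + 1 : ℂ) ≠ 0 := mod_cast m.succ_ne_zero
  have hleft : jTheta 0 (m + 1) τ ((-(1 / 2) + m * (z + w)) / (m + 1)) =
      jacobiTheta₂ (1 / 2 + m * (2 * z - (z - w))) (2 * (m + 1) * τ) := by
    rw [jTheta_zero hm', ← jacobiTheta₂_add_left]
    ring_nf
  have hright : jTheta 0 (m + 1) τ ((1 / 2 + z + w) / (m + 1) + z - w) =
      jacobiTheta₂ (1 / 2 + 2 * z + m * (z - w)) (2 * (m + 1) * τ) := by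
    rw [← jTheta_zero hm']
    congr 1
    field_simp
    ring
  convert hasSum_tripleTerm hm hτ hz (z - w) using 1
  rw [hleft, hright]
  linear_combination jacobiTheta₂ (1 / 2 + 2 * z + m * (z - w)) (2 * (m + 1) * τ) *
    e2_mul_tsum_appellTerm_half hτ hz

/-! ### The resulting theta series -/

lemma jacobiTheta₂_half_add_odd_mul (τ : ℂ) (i : ℤ) :
    jacobiTheta₂ (1 / 2 + (2 * i + 1) * τ) (2 * τ) = 0 := by
  have hreflect (n : ℤ) : jacobiTheta₂_term (-(2 * i + 1) - n) (1 / 2 + (2 * i + 1) * τ) (2 * τ) =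
      -jacobiTheta₂_term n (1 / 2 + (2 * i + 1) * τ) (2 * τ) := by
    rw [jacobiTheta₂_term_eq_e2, jacobiTheta₂_term_eq_e2, ← e2_add_half,
      ← e2_add_intCast _ (n + i + 1)]
    push_cast
    ring_nf
  have h := (Equiv.subLeft (-(2 * i + 1))).tsum_eq
    fun n ↦ jacobiTheta₂_term n (1 / 2 + (2 * i + 1) * τ) (2 * τ)
  simp only [Equiv.subLeft_apply, hreflect, tsum_neg] at h
  exact neg_eq_self.1 h

/-- The part of the vanishing theta series `jacobiTheta₂ (1 / 2 + (2 * i + 1) * τ) (2 * τ)` indexed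
by the `n` with `i < m * n`. -/
def partialTheta (m : ℕ) (τ : ℂ) (i : ℤ) : ℂ :=
  ∑' n : ℤ, {n : ℤ | i < m * n}.indicator
    (fun n ↦ jacobiTheta₂_term n (1 / 2 + (2 * i + 1) * τ) (2 * τ)) n

lemma partialTheta_neg_add_one (m : ℕ) {τ : ℂ} (hτ : 0 < τ.im) (i : ℤ) :
    partialTheta m τ (-(i + 1)) = -partialTheta m τ i := by
  set a : ℤ → ℂ := fun n ↦ jacobiTheta₂_term n (1 / 2 + (2 * i + 1) * τ) (2 * τ)
  have hneg (n : ℤ) : jacobiTheta₂_term (-n) (1 / 2 + (2 * (-(i + 1) : ℤ) + 1) * τ) (2 * τ) =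
      a n := by
    simp only [a]
    rw [jacobiTheta₂_term_eq_e2, jacobiTheta₂_term_eq_e2, ← e2_add_intCast _ n]
    push_cast
    ring_nf
  have hsum : Summable a :=
    (summable_norm_jacobiTheta₂_term (σ := 2 * τ) (by simpa using hτ) _).of_norm
  have hzero : ∑' n, a n = 0 := jacobiTheta₂_half_add_odd_mul τ i
  calc partialTheta m τ (-(i + 1)) = ∑' n, {n : ℤ | i < m * n}ᶜ.indicator a n := by
        rw [partialTheta, ← (Equiv.neg ℤ).tsum_eq]
        refine tsum_congr fun n ↦ ?_
        simp only [Equiv.neg_apply, Set.indicator_apply, hneg, Set.mem_ofPred_eq, Set.mem_compl_iff]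
        congr 1
        rw [mul_neg, eq_iff_iff]
        lia
    _ = -partialTheta m τ i := by
        rw [Set.indicator_compl, eq_neg_iff_add_eq_zero, ← hzero, partialTheta]
        simp only [Pi.sub_apply]
        rw [hsum.tsum_sub (hsum.indicator _), sub_add_cancel]

lemma partialTheta_natCast (m : ℕ) (τ : ℂ) (i : ℕ) :
    partialTheta m τ i = ∑' N : ℕ, if i < m * (N + 1) then
      jacobiTheta₂_term (N + 1) (1 / 2 + (2 * i + 1) * τ) (2 * τ) else 0 := by
  have hinj : Function.Injective fun N : ℕ ↦ (N + 1 : ℤ) := fun _ _ h ↦ by simpa using h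
  rw [partialTheta, ← hinj.tsum_eq]
  · refine tsum_congr fun N ↦ ?_
    simp only [Set.indicator_apply, Set.mem_ofPred_eq, Int.cast_natCast]
    norm_cast
  · intro n hn
    have hmem : n ∈ {n : ℤ | (i : ℤ) < m * n} := Set.mem_of_indicator_ne_zero hn
    rw [Set.mem_ofPred_eq] at hmem
    have hpos : 0 < (m : ℤ) * n := by lia
    exact ⟨(n - 1).toNat, by
      have := pos_of_mul_pos_right hpos m.cast_nonneg
      simp only
      lia⟩

lemma hasSum_signedIndicator_mul {a b : ℤ → ℂ} (ha : Summable fun n ↦ ‖a n‖)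
    (ha₀ : ∑' n, a n = 0) (hb : Summable fun l ↦ ‖b l‖) (M i : ℤ) :
    HasSum (fun x : ℤ × ℤ ↦ signedIndicator (M * x.1) x.2 i * (a x.1 * b x.2))
      (-((∑' n, {n : ℤ | i < M * n}.indicator a n) * ∑' l, b l)) := by
  have hind {f : ℤ → ℂ} (hf : Summable fun n ↦ ‖f n‖) (s : Set ℤ) :
      Summable fun n ↦ ‖s.indicator f n‖ :=
    hf.of_nonneg_of_le (fun _ ↦ norm_nonneg _) fun _ ↦ norm_indicator_le_norm_self _ _
  have hprod {f g : ℤ → ℂ} (hf : Summable fun n ↦ ‖f n‖) (hg : Summable fun n ↦ ‖g n‖) :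
      HasSum (fun x : ℤ × ℤ ↦ f x.1 * g x.2) ((∑' n, f n) * ∑' l, g l) :=
    hf.of_norm.hasSum.mul hg.of_norm.hasSum (summable_mul_of_summable_norm hf hg)
  have h := (hprod ha (hind hb (Set.Ioi i))).sub (hprod (hind ha {n : ℤ | i < M * n}) hb)
  rw [ha₀, zero_mul, zero_sub] at h
  refine h.congr_fun fun x ↦ ?_
  simp only [signedIndicator, Set.indicator_apply, Set.mem_Iio, Set.mem_Ioi, Set.mem_ofPred_eq,
    Pi.one_apply]
  split_ifs <;> ring

lemma hasSum_tripleTerm_snd {m : ℕ} (hm : 0 < m) {τ : ℂ} (hτ : 0 < τ.im) (z d : ℂ) (i : ℤ) :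
    HasSum (fun x ↦ tripleTerm m τ z d (x, i)) (-(partialTheta m τ i *
      (e2 ((2 * i + 1) * (2 * z - d) / 2 - (2 * i + 1) ^ 2 * τ / (4 * m)) *
        jTheta (2 * i + 1 : ℤ) m τ d))) := by
  have ha := summable_norm_jacobiTheta₂_term (σ := 2 * τ) (by simpa using hτ)
    (1 / 2 + (2 * i + 1) * τ)
  have hb := summable_norm_jacobiTheta₂_term (im_two_mul_natCast_mul_pos hm hτ)
    (m * d + (2 * i + 1) * τ)
  have htheta : e2 ((2 * i + 1) * (2 * z - d) / 2 - (2 * i + 1) ^ 2 * τ / (4 * m)) *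
      jTheta (2 * i + 1 : ℤ) m τ d =
        e2 ((2 * i + 1) * z) * jacobiTheta₂ (m * d + (2 * i + 1) * τ) (2 * m * τ) := by
    rw [jTheta_eq_e2_mul_jacobiTheta₂ (mod_cast hm.ne'), ← mul_assoc, ← e2_add]
    push_cast
    ring_nf
  have h := (hasSum_signedIndicator_mul ha (jacobiTheta₂_half_add_odd_mul τ i) hb m i).mul_left
    (e2 ((2 * i + 1) * z))
  rw [htheta, mul_left_comm, ← mul_neg]
  refine h.congr_fun fun x ↦ ?_
  rw [tripleTerm]
  ring

lemma jTheta_neg_right (k m τ z : ℂ) : jTheta k m τ (-z) = jTheta (-k) m τ z := by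
  rw [jTheta, jTheta, ← (Equiv.neg ℤ).tsum_eq]
  refine tsum_congr fun j ↦ ?_
  simp only [Equiv.neg_apply]
  push_cast
  ring_nf

lemma jTheta_add_two_mul {m : ℂ} (hm : m ≠ 0) (k τ z : ℂ) :
    jTheta (k + 2 * m) m τ z = jTheta k m τ z := by
  refine Eq.trans (tsum_congr fun j ↦ ?_) ((Equiv.addRight (1 : ℤ)).tsum_eq _)
  rw [add_div, div_self (mul_ne_zero two_ne_zero hm)]
  simp only [Equiv.coe_addRight]
  push_cast
  ring_nf

/-- `θ_{K,m} - θ_{-K,m}`, which is odd as a function of `K`. -/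
def oddTheta (m : ℕ) (τ d : ℂ) (K : ℤ) : ℂ := jTheta K m τ d - jTheta (-K) m τ d

lemma oddTheta_neg (m : ℕ) (τ d : ℂ) (K : ℤ) : oddTheta m τ d (-K) = -oddTheta m τ d K := by
  rw [oddTheta, oddTheta, Int.cast_neg, neg_neg, neg_sub]

lemma oddTheta_periodic {m : ℕ} (hm : 0 < m) (τ d : ℂ) :
    Function.Periodic (oddTheta m τ d) (2 * m) := by
  have hm' : (m : ℂ) ≠ 0 := mod_cast hm.ne'
  intro K
  rw [oddTheta, oddTheta]
  push_cast
  rw [jTheta_add_two_mul hm', ← jTheta_add_two_mul hm' (-(K + 2 * m)), neg_add_rev,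
    neg_add_cancel_comm]

lemma oddTheta_add_mul {m : ℕ} (hm : 0 < m) (τ d : ℂ) (r K : ℤ) :
    oddTheta m τ d (2 * m * r + K) = oddTheta m τ d K := by
  rw [add_comm, mul_comm]
  exact (oddTheta_periodic hm τ d).int_mul r K

lemma oddTheta_self {m : ℕ} (hm : 0 < m) (τ d : ℂ) : oddTheta m τ d m = 0 := by
  have h := oddTheta_neg m τ d m
  rw [← oddTheta_periodic hm τ d (-m), two_mul, neg_add_cancel_left] at h
  exact self_eq_neg.1 h

lemma exists_norm_oddTheta_le {m : ℕ} (hm : 0 < m) (τ d : ℂ) :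
    ∃ C, ∀ K, ‖oddTheta m τ d K‖ ≤ C := by
  obtain ⟨C, hC⟩ := ((Set.finite_Ico (0 : ℤ) (2 * m)).image
    fun K ↦ ‖oddTheta m τ d K‖).bddAbove
  refine ⟨C, fun K ↦ ?_⟩
  rw [← Int.mul_ediv_add_emod K (2 * m), oddTheta_add_mul hm]
  exact hC ⟨_, ⟨Int.emod_nonneg _ (by lia), Int.emod_lt_of_pos _ (by lia)⟩, rfl⟩

lemma hasSum_partialTheta_int {m : ℕ} (hm : 0 < m) {τ : ℂ} (hτ : 0 < τ.im) {z w S S' : ℂ}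
    (hz : HasSum (tripleTerm m τ z (z - w)) S) (hw : HasSum (tripleTerm m τ w (w - z)) S') :
    HasSum (fun i : ℤ ↦ partialTheta m τ i *
      (e2 ((2 * i + 1) * (z + w) / 2 - (2 * i + 1) ^ 2 * τ / (4 * m)) *
        oddTheta m τ (z - w) (2 * i + 1))) (S' - S) := by
  have hfiber {z d S : ℂ} (h : HasSum (tripleTerm m τ z d) S) :=
    ((Equiv.prodComm ℤ (ℤ × ℤ)).hasSum_iff.2 h).prod_fiberwise (hasSum_tripleTerm_snd hm hτ z d)
  refine ((hfiber hw).sub (hfiber hz)).congr_fun fun i ↦ ?_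
  rw [show 2 * z - (z - w) = z + w by ring, show 2 * w - (w - z) = z + w by ring, ← neg_sub z w,
    jTheta_neg_right, oddTheta]
  ring

lemma hasSum_partialTheta_nat {m : ℕ} (hm : 0 < m) {τ : ℂ} (hτ : 0 < τ.im) {z w S S' : ℂ}
    (hz : HasSum (tripleTerm m τ z (z - w)) S) (hw : HasSum (tripleTerm m τ w (w - z)) S') :
    HasSum (fun i : ℕ ↦ partialTheta m τ i * (e2 (-((2 * i + 1) ^ 2 * τ / (4 * m))) *
      (e2 ((2 * i + 1) * (z + w) / 2) + e2 (-((2 * i + 1) * (z + w) / 2))) *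
        oddTheta m τ (z - w) (2 * i + 1))) (S' - S) := by
  refine (hasSum_partialTheta_int hm hτ hz hw).nat_add_neg_add_one.congr_fun fun i ↦ ?_
  have hcast : 2 * ((-(i + 1 : ℤ) : ℤ) : ℂ) + 1 = -(2 * i + 1) := by
    push_cast
    ring
  rw [partialTheta_neg_add_one m hτ, hcast, show 2 * -(i + 1 : ℤ) + 1 = -(2 * i + 1) by ring,
    oddTheta_neg, neg_sq, neg_mul (2 * _ + 1), neg_div, sub_eq_add_neg (_ / 2),
    sub_eq_add_neg (-(_ / 2)), e2_add, e2_add, Int.cast_natCast]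
  ring

/-! ### The correction terms -/

/-- The term indexed by `n` and `K` of the correction series, with `K = 2mr ± k` in the notation of
the theorem and with the periodicity of `oddTheta` used to replace `±k` by `K`. -/
def correctionTerm (m : ℕ) (τ y d : ℂ) (n : ℕ) (K : ℤ) : ℂ :=
  (-1) ^ n * qpow τ ((m + 1) * n ^ 2 - (2 * m * n - K) ^ 2 / (4 * m)) *
    (Complex.exp (Real.pi * I * K * y) + Complex.exp (-(Real.pi * I) * K * y)) *
      oddTheta m τ d K

lemma correctionTerm_eq_e2 (m : ℕ) (τ y d : ℂ) (n : ℕ) (K : ℤ) :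
    correctionTerm m τ y d n K = (-1) ^ n *
      e2 (((m + 1) * n ^ 2 - (2 * m * n - K) ^ 2 / (4 * m)) * τ) *
        (e2 (K * (y / 2)) + e2 (K * -(y / 2))) * oddTheta m τ d K := by
  have hexp : Complex.exp (Real.pi * I * K * y) = e2 (K * (y / 2)) := by
    rw [e2]
    ring_nf
  have hexp' : Complex.exp (-(Real.pi * I) * K * y) = e2 (K * -(y / 2)) := by
    rw [e2]
    ring_nf
  rw [correctionTerm, qpow_eq_e2, hexp, hexp', mul_comm τ]

lemma correctionTerm_eq_jacobiTheta₂_term_mul {m : ℕ} (hm : 0 < m) (τ y d : ℂ) (n : ℕ) (K : ℤ) :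
    correctionTerm m τ y d n K = jacobiTheta₂_term n (1 / 2 + K * τ) (2 * τ) *
      (e2 (-(K ^ 2 * τ / (4 * m))) * (e2 (K * y / 2) + e2 (-(K * y / 2))) *
        oddTheta m τ d K) := by
  have hm' : (m : ℂ) ≠ 0 := mod_cast hm.ne'
  have hpow : (-1) ^ n * e2 (((m + 1) * n ^ 2 - (2 * m * n - K) ^ 2 / (4 * m)) * τ) =
      jacobiTheta₂_term n (1 / 2 + K * τ) (2 * τ) * e2 (-(K ^ 2 * τ / (4 * m))) := by
    rw [← zpow_natCast, ← e2_intCast_div_two, jacobiTheta₂_term_eq_e2, ← e2_add, ← e2_add]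
    congr 1
    push_cast
    field_simp
    ring
  rw [correctionTerm_eq_e2, hpow, mul_neg, mul_div_assoc (K : ℂ) y]
  ring

lemma sq_add_sq_div_le {M n K : ℝ} (hM : 0 < M) (hK : 0 ≤ K) (hKn : K ≤ 2 * M * n) :
    n ^ 2 + K ^ 2 / (4 * M) ≤ (M + 1) * n ^ 2 - (2 * M * n - K) ^ 2 / (4 * M) := by
  have hdiff : (M + 1) * n ^ 2 - (2 * M * n - K) ^ 2 / (4 * M) - (n ^ 2 + K ^ 2 / (4 * M)) =
      K * (2 * M * n - K) / (2 * M) := by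
    field_simp
    ring
  rw [← sub_nonneg, hdiff]
  exact div_nonneg (mul_nonneg hK (sub_nonneg.2 hKn)) (by linarith)

lemma norm_correctionTerm_le {m : ℕ} (hm : 0 < m) {τ : ℂ} (hτ : 0 < τ.im) (y d : ℂ) {n : ℕ}
    {K : ℤ} (hK : 0 ≤ K) (hKn : K ≤ 2 * m * n) :
    ‖correctionTerm m τ y d n K‖ ≤ ‖jacobiTheta₂_term n 0 (2 * τ)‖ *
      ((‖jacobiTheta₂_term K (y / 2) (τ / (2 * m))‖ +
        ‖jacobiTheta₂_term K (-(y / 2)) (τ / (2 * m))‖) * ‖oddTheta m τ d K‖) := by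
  have hform := norm_e2_mul_le_of_le hτ (sq_add_sq_div_le (mod_cast hm : (0 : ℝ) < m)
    (mod_cast hK : (0 : ℝ) ≤ K) (mod_cast hKn : (K : ℝ) ≤ 2 * m * n))
  have hexp (v : ℂ) :
      ‖e2 (((m + 1) * n ^ 2 - (2 * m * n - K) ^ 2 / (4 * m)) * τ)‖ * ‖e2 (K * v)‖ ≤
        ‖jacobiTheta₂_term n 0 (2 * τ)‖ * ‖jacobiTheta₂_term K v (τ / (2 * m))‖ := by
    calc _ ≤ ‖e2 ((n ^ 2 + K ^ 2 / (4 * m) : ℝ) * τ)‖ * ‖e2 (K * v)‖ := by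
          push_cast at hform ⊢
          gcongr
      _ = _ := by
          rw [jacobiTheta₂_term_eq_e2, jacobiTheta₂_term_eq_e2, ← norm_mul, ← norm_mul, ← e2_add,
            ← e2_add]
          push_cast
          ring_nf
  rw [correctionTerm_eq_e2, norm_mul, norm_mul, norm_mul, norm_pow, norm_neg, norm_one, one_pow,
    one_mul, ← mul_assoc ‖jacobiTheta₂_term n 0 (2 * τ)‖, mul_add]
  exact mul_le_mul_of_nonneg_right ((mul_le_mul_of_nonneg_left (norm_add_le _ _)
    (norm_nonneg _)).trans (mul_add (‖e2 _‖) _ _ ▸ add_le_add (hexp _) (hexp _))) (norm_nonneg _)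

lemma summable_ite_correctionTerm {m : ℕ} (hm : 0 < m) {τ : ℂ} (hτ : 0 < τ.im) (y d : ℂ)
    {a b : ℤ} (ha : a ≠ 0) {s : ℕ → Finset ℕ}
    (hs : ∀ N, ∀ r ∈ s N, 0 ≤ a * r + b ∧ a * r + b ≤ 2 * m * (N + 1 : ℕ)) :
    Summable fun x : ℕ × ℕ ↦
      if x.2 ∈ s x.1 then correctionTerm m τ y d (x.1 + 1) (a * x.2 + b) else 0 := by
  have hσ := im_div_two_mul_natCast_pos hm hτ
  obtain ⟨C, hC⟩ := exists_norm_oddTheta_le hm τ d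
  have hinj : Function.Injective fun r : ℕ ↦ a * r + b := fun r r' h ↦ by
    simpa [ha] using h
  have hinj' : Function.Injective fun N : ℕ ↦ ((N + 1 : ℕ) : ℤ) := fun _ _ h ↦ by simpa using h
  have hsumN : Summable fun N : ℕ ↦ ‖jacobiTheta₂_term (N + 1 : ℕ) 0 (2 * τ)‖ :=
    (summable_norm_jacobiTheta₂_term (σ := 2 * τ) (by simpa using hτ) 0).comp_injective hinj'
  have hsumK : Summable fun r : ℕ ↦ (‖jacobiTheta₂_term (a * r + b) (y / 2) (τ / (2 * m))‖ +
      ‖jacobiTheta₂_term (a * r + b) (-(y / 2)) (τ / (2 * m))‖) * C :=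
    (((summable_norm_jacobiTheta₂_term hσ _).add
      (summable_norm_jacobiTheta₂_term hσ _)).comp_injective hinj).mul_right C
  have hC₀ : 0 ≤ C := (norm_nonneg _).trans (hC 0)
  refine .of_norm_bounded (hsumN.mul_of_nonneg hsumK (fun _ ↦ norm_nonneg _)
    fun _ ↦ by positivity) fun x ↦ ?_
  split_ifs with hx
  · obtain ⟨h₀, h₁⟩ := hs _ _ hx
    refine (norm_correctionTerm_le hm hτ y d h₀ h₁).trans ?_
    gcongr
    exact hC _
  · rw [norm_zero]
    positivity

lemma tsum_ite_mem {ι M : Type*} [DecidableEq ι] [AddCommMonoid M] [TopologicalSpace M]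
    (s : Finset ι) (f : ι → M) : ∑' r, (if r ∈ s then f r else 0) = ∑ r ∈ s, f r := by
  rw [tsum_eq_sum (s := s) fun r hr ↦ if_neg hr]
  exact sum_congr rfl fun r hr ↦ if_pos hr

lemma tsum_tsum_ite_correctionTerm {m : ℕ} (hm : 0 < m) {τ : ℂ} (hτ : 0 < τ.im) (y d : ℂ)
    {a b : ℤ} (ha : a ≠ 0) {s : ℕ → Finset ℕ}
    (hs : ∀ N, ∀ r ∈ s N, 0 ≤ a * r + b ∧ a * r + b ≤ 2 * m * (N + 1 : ℕ)) :
    ∑' (r : ℕ) (N : ℕ), (if r ∈ s N then correctionTerm m τ y d (N + 1) (a * r + b) else 0) =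
      ∑' N : ℕ, ∑ r ∈ s N, correctionTerm m τ y d (N + 1) (a * r + b) := by
  rw [Summable.tsum_comm
    (f := fun N r : ℕ ↦ if r ∈ s N then correctionTerm m τ y d (N + 1) (a * r + b) else 0)
    (summable_ite_correctionTerm hm hτ y d ha hs)]
  exact tsum_congr fun N ↦ tsum_ite_mem (s N) fun r : ℕ ↦ correctionTerm m τ y d (N + 1) (a * r + b)

lemma summable_sum_correctionTerm {m : ℕ} (hm : 0 < m) {τ : ℂ} (hτ : 0 < τ.im) (y d : ℂ)
    {a b : ℤ} (ha : a ≠ 0) {s : ℕ → Finset ℕ}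
    (hs : ∀ N, ∀ r ∈ s N, 0 ≤ a * r + b ∧ a * r + b ≤ 2 * m * (N + 1 : ℕ)) :
    Summable fun N ↦ ∑ r ∈ s N, correctionTerm m τ y d (N + 1) (a * r + b) := by
  refine (summable_ite_correctionTerm hm hτ y d ha hs).prod.congr fun N ↦ ?_
  exact tsum_ite_mem (s N) fun r : ℕ ↦ correctionTerm m τ y d (N + 1) (a * r + b)

lemma sum_range_odd {M : Type*} [AddCommMonoid M] {f : ℤ → M} {m : ℕ} (hf : f m = 0) :
    ∑ i ∈ range m, f (2 * i + 1) =
      ∑ k ∈ Icc 1 (m - 1) with Odd k, f k +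
        ∑ k ∈ Icc 1 (m - 1) with Odd k, f (2 * m - k) := by
  have hsplit (i : ℕ) : f (2 * i + 1) = (if 2 * i + 1 < m then f (2 * i + 1) else 0) +
      if m < 2 * i + 1 then f (2 * i + 1) else 0 := by
    rcases lt_trichotomy (2 * i + 1) m with h | h | h
    · rw [if_pos h, if_neg h.not_gt, add_zero]
    · have h' : (2 * i + 1 : ℤ) = m := mod_cast h
      rw [h', hf, ite_self, ite_self, add_zero]
    · rw [if_neg h.not_gt, if_pos h, zero_add]
  rw [sum_congr rfl fun i _ ↦ hsplit i, sum_add_distrib, ← sum_filter, ← sum_filter]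
  congr 1
  · refine sum_nbij' (fun i ↦ 2 * i + 1) (fun k ↦ k / 2) ?_ ?_ ?_ ?_ ?_
    all_goals grind
  · refine sum_nbij' (fun i ↦ 2 * m - (2 * i + 1)) (fun k ↦ m - (k + 1) / 2) ?_ ?_ ?_ ?_ ?_
    all_goals grind

lemma sum_range_mul_odd {M : Type*} [AddCommMonoid M] {f : ℤ → M} {m : ℕ}
    (hf : ∀ r : ℕ, f (2 * m * r + m) = 0) (n : ℕ) :
    ∑ i ∈ range (m * n), f (2 * i + 1) =
      ∑ r ∈ range n, ∑ k ∈ Icc 1 (m - 1) with Odd k, f (2 * m * r + k) +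
        ∑ r ∈ Icc 1 n, ∑ k ∈ Icc 1 (m - 1) with Odd k, f (2 * m * r - k) := by
  induction n with
  | zero => simp
  | succ n ih =>
    have hblock := sum_range_odd (f := fun K ↦ f (2 * m * n + K)) (hf n)
    rw [mul_add_one, sum_range_add, ih, sum_range_succ, sum_Icc_succ_top (Nat.le_add_left 1 n),
      add_add_add_comm]
    congr 1
    convert hblock using 3
    all_goals
      push_cast
      ring_nf

lemma tsum_sum_range_correctionTerm {m : ℕ} (hm : 0 < m) {τ : ℂ} (hτ : 0 < τ.im) (y d : ℂ) :
    ∑' N : ℕ, ∑ i ∈ range (m * (N + 1)), correctionTerm m τ y d (N + 1) (2 * i + 1) =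
      (∑' N : ℕ, ∑ r ∈ range (N + 1), ∑ k ∈ Icc 1 (m - 1) with Odd k,
        correctionTerm m τ y d (N + 1) (2 * m * r + k)) +
      ∑' N : ℕ, ∑ r ∈ Icc 1 (N + 1), ∑ k ∈ Icc 1 (m - 1) with Odd k,
        correctionTerm m τ y d (N + 1) (2 * m * r - k) := by
  have hm' : (2 * m : ℤ) ≠ 0 := by lia
  have hzero (n r : ℕ) : correctionTerm m τ y d n (2 * m * r + m) = 0 := by
    rw [correctionTerm, oddTheta_add_mul hm, oddTheta_self hm, mul_zero]
  rw [← Summable.tsum_add]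
  · exact tsum_congr fun N ↦ sum_range_mul_odd (hzero _) _
  · simp only [sum_comm (s := range _)]
    refine summable_sum fun k hk ↦ summable_sum_correctionTerm hm hτ y d hm' fun N r hr ↦ ?_
    have hmul : (m * r : ℤ) ≤ m * N := by
      gcongr
      exact Nat.lt_succ_iff.1 (mem_range.1 hr)
    have hkm := mem_Icc.1 (mem_filter.1 hk).1
    grind
  · simp only [sum_comm (s := Icc _ _), sub_eq_add_neg]
    refine summable_sum fun k hk ↦ summable_sum_correctionTerm hm hτ y d hm' fun N r hr ↦ ?_
    have hmul : (m * 1 : ℤ) ≤ m * r := by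
      gcongr
      exact mod_cast (mem_Icc.1 hr).1
    have hmul' : (m * r : ℤ) ≤ m * (N + 1 : ℕ) := by
      gcongr
      exact (mem_Icc.1 hr).2
    have hkm := mem_Icc.1 (mem_filter.1 hk).1
    grind

lemma partialTheta_mul_eq_tsum {m : ℕ} (hm : 0 < m) (τ y d : ℂ) (i : ℕ) :
    partialTheta m τ i * (e2 (-((2 * i + 1) ^ 2 * τ / (4 * m))) *
      (e2 ((2 * i + 1) * y / 2) + e2 (-((2 * i + 1) * y / 2))) * oddTheta m τ d (2 * i + 1)) =
        ∑' N : ℕ, if i ∈ range (m * (N + 1)) then correctionTerm m τ y d (N + 1) (2 * i + 1)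
          else 0 := by
  rw [partialTheta_natCast, ← tsum_mul_right]
  refine tsum_congr fun N ↦ ?_
  rw [ite_mul, zero_mul, correctionTerm_eq_jacobiTheta₂_term_mul hm]
  simp only [mem_range]
  push_cast
  rfl

lemma sub_eq_tsum_correctionTerm {m : ℕ} (hm : 0 < m) {τ : ℂ} (hτ : 0 < τ.im) {z w S S' : ℂ}
    (hz : HasSum (tripleTerm m τ z (z - w)) S) (hw : HasSum (tripleTerm m τ w (w - z)) S') :
    S' - S =
      (∑' N : ℕ, ∑ r ∈ range (N + 1), ∑ k ∈ Icc 1 (m - 1) with Odd k,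
        correctionTerm m τ (z + w) (z - w) (N + 1) (2 * m * r + k)) +
      ∑' N : ℕ, ∑ r ∈ Icc 1 (N + 1), ∑ k ∈ Icc 1 (m - 1) with Odd k,
        correctionTerm m τ (z + w) (z - w) (N + 1) (2 * m * r - k) := by
  have hrange (N i : ℕ) (hi : i ∈ range (m * (N + 1))) :
      0 ≤ 2 * i + (1 : ℤ) ∧ 2 * i + (1 : ℤ) ≤ 2 * m * (N + 1 : ℕ) := by
    have hlt : (i : ℤ) < m * (N + 1 : ℕ) := mod_cast mem_range.1 hi
    constructor
    · positivity
    · linarith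
  rw [← (hasSum_partialTheta_nat hm hτ hz hw).tsum_eq, ← tsum_sum_range_correctionTerm hm hτ,
    ← tsum_tsum_ite_correctionTerm hm hτ _ _ two_ne_zero hrange]
  exact tsum_congr (partialTheta_mul_eq_tsum hm τ (z + w) (z - w))

lemma correctionTerm_mul_add {m : ℕ} (hm : 0 < m) (τ y d : ℂ) (N r k : ℕ) :
    correctionTerm m τ y d (N + 1) (2 * m * r + k) =
      (-1) ^ (N + 1) *
        qpow τ ((m + 1) * (N + 1) ^ 2 - (2 * m * (N + 1 - r) - k) ^ 2 / (4 * m)) *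
          (Complex.exp (Real.pi * I * (2 * m * r + k) * y) +
            Complex.exp (-(Real.pi * I) * (2 * m * r + k) * y)) *
              (jTheta k m τ d - jTheta (-k) m τ d) := by
  rw [correctionTerm, oddTheta_add_mul hm, oddTheta]
  push_cast
  rw [mul_sub (2 * m : ℂ), sub_sub]

lemma correctionTerm_mul_sub {m : ℕ} (hm : 0 < m) (τ y d : ℂ) (N r k : ℕ) :
    correctionTerm m τ y d (N + 1) (2 * m * r - k) =
      -((-1) ^ (N + 1) *
        qpow τ ((m + 1) * (N + 1) ^ 2 - (2 * m * (N + 1 - r) + k) ^ 2 / (4 * m)) *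
          (Complex.exp (Real.pi * I * (2 * m * r - k) * y) +
            Complex.exp (-(Real.pi * I) * (2 * m * r - k) * y)) *
              (jTheta k m τ d - jTheta (-k) m τ d)) := by
  rw [correctionTerm, sub_eq_add_neg (2 * m * r : ℤ), oddTheta_add_mul hm, oddTheta_neg, mul_neg,
    oddTheta]
  push_cast
  rw [mul_sub (2 * m : ℂ), ← sub_eq_add_neg, sub_sub_eq_add_sub, ← sub_add_eq_add_sub]

theorem statement12 (m : ℕ) (hm : 0 < m)
    (τ : ℂ) (hτ : 0 < τ.im) (z1 z3 : ℂ)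
    (h1 : ¬ InLattice τ z1) (h2 : ¬ InLattice τ (z1 + 1 / 2))
    (h3 : ¬ InLattice τ z3) (h4 : ¬ InLattice τ (z3 + 1 / 2)) :
    jTheta 0 ((m : ℂ) + 1) τ ((-(1 / 2) + (m : ℂ) * (z1 + z3)) / ((m : ℂ) + 1)) *
        (Phi (m : ℂ) 0 τ z1 (-z3) 0 -
          Phi (m : ℂ) 0 τ (z1 + 1 / 2) (-z3 - 1 / 2) 0) =
      2 * Complex.I * eta τ ^ 2 * eta (2 * τ) ^ 2 *
          (-(jTheta 0 ((m : ℂ) + 1) τ ((1 / 2 + z1 + z3) / ((m : ℂ) + 1) + z1 - z3) /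
              (mumford 1 1 τ z1 * mumford 1 0 τ z1)) +
            jTheta 0 ((m : ℂ) + 1) τ ((1 / 2 + z1 + z3) / ((m : ℂ) + 1) - z1 + z3) /
              (mumford 1 1 τ z3 * mumford 1 0 τ z3)) +
        2 * (∑' j : ℕ, ∑ r ∈ Finset.Icc 1 (j + 1),
          ∑ k ∈ (Finset.Icc 1 (m - 1)).filter (fun k => Odd k),
            (-1 : ℂ) ^ (j + 1) *
              qpow τ (((m : ℂ) + 1) * ((j : ℂ) + 1) ^ 2 -
                (2 * (m : ℂ) * ((j : ℂ) + 1 - (r : ℂ)) + (k : ℂ)) ^ 2 / (4 * (m : ℂ))) *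
              (Complex.exp (Real.pi * Complex.I *
                  (2 * (m : ℂ) * (r : ℂ) - (k : ℂ)) * (z1 + z3)) +
                Complex.exp (-(Real.pi * Complex.I) *
                  (2 * (m : ℂ) * (r : ℂ) - (k : ℂ)) * (z1 + z3))) *
              (jTheta (k : ℂ) (m : ℂ) τ (z1 - z3) -
                jTheta (-(k : ℂ)) (m : ℂ) τ (z1 - z3))) -
        2 * (∑' j : ℕ, ∑ r ∈ Finset.range (j + 1),
          ∑ k ∈ (Finset.Icc 1 (m - 1)).filter (fun k => Odd k),
            (-1 : ℂ) ^ (j + 1) *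
              qpow τ (((m : ℂ) + 1) * ((j : ℂ) + 1) ^ 2 -
                (2 * (m : ℂ) * ((j : ℂ) + 1 - (r : ℂ)) - (k : ℂ)) ^ 2 / (4 * (m : ℂ))) *
              (Complex.exp (Real.pi * Complex.I *
                  (2 * (m : ℂ) * (r : ℂ) + (k : ℂ)) * (z1 + z3)) +
                Complex.exp (-(Real.pi * Complex.I) *
                  (2 * (m : ℂ) * (r : ℂ) + (k : ℂ)) * (z1 + z3))) *
              (jTheta (k : ℂ) (m : ℂ) τ (z1 - z3) -
                jTheta (-(k : ℂ)) (m : ℂ) τ (z1 - z3))) := by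
  have hz1 := e2_two_mul_add_ne_one h1 h2
  have hz3 := e2_two_mul_add_ne_one h3 h4
  have hsub := sub_eq_tsum_correctionTerm hm hτ (hasSum_tripleTerm_sub hm hτ hz1 z3)
    (hasSum_tripleTerm_sub hm hτ hz3 z1)
  simp only [correctionTerm_mul_add hm, correctionTerm_mul_sub hm, sum_neg_distrib,
    tsum_neg] at hsub
  have harg : (1 / 2 + z1 + z3) / ((m : ℂ) + 1) - z1 + z3 =
      (1 / 2 + z3 + z1) / ((m : ℂ) + 1) + z3 - z1 := by ring
  rw [Phi_sub_Phi_half hm hτ hz1 hz3, harg]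
  rw [add_comm z3 z1] at hsub
  linear_combination -2 * hsub

end Wakimoto
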